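/- arXiv:2102.04203 — 2 statements merged into one kernel-verified Lean document; each statement's English description precedes it below -/
import Mathlib

section
/- Let G be a (possibly infinite) graph and let T ⊆ V(G) be such that there is an s ∈ T with d(t) ≤ 1 for every t ∈ T−s, there is no X ⊆ V(G)∖T with d_G(X) an odd natural number, and there is a system 𝒫_s of pairwise edge-disjoint paths between s and T−s covering δ(s). Then there exists a system 𝒫 of pairwise edge-disjoint T-paths covering ⋃_{t∈T} δ(t). -/
/-!
Common definitions: multigraphs (parallel edges allowed, no loops), walks,
paths, cuts, waves and related notions used in the statements below.
-/

universe u v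

/-- A multigraph with vertex type `V` and edge type `E`: every edge is assigned
an unordered pair of *distinct* end-vertices (parallel edges allowed, no loops). -/
structure Multigraph (V : Type u) (E : Type v) : Type (max u v) where
  inc : E → Sym2 V
  not_isDiag : ∀ e, ¬ (inc e).IsDiag

namespace Multigraph

variable {V : Type u} {E : Type v}

/-- Walks in a multigraph, recorded together with the edges they traverse. -/
inductive Walk (G : Multigraph V E) : V → V → Type (max u v)
  | nil (v : V) : Walk G v v
  | cons {u v w : V} (e : E) (he : G.inc e = s(u, v)) (p : Walk G v w) : Walk G u w

namespace Walk

variable {G : Multigraph V E}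

/-- The list of vertices visited by a walk. -/
def support : ∀ {u w : V}, G.Walk u w → List V
  | _, _, .nil v => [v]
  | u, _, .cons _ _ p => u :: p.support

/-- The list of edges traversed by a walk. -/
def edges : ∀ {u w : V}, G.Walk u w → List E
  | _, _, .nil _ => []
  | _, _, .cons e _ p => e :: p.edges

end Walk

/-- `δ_G(v)`: the set of edges incident with the vertex `v`. -/
def inci (G : Multigraph V E) (v : V) : Set E := {e | v ∈ G.inc e}

/-- `δ_G(X)`: the set of edges with exactly one end-vertex in `X`. -/
def cut (G : Multigraph V E) (X : Set V) : Set E :=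
  {e | ∃ x y, G.inc e = s(x, y) ∧ x ∈ X ∧ y ∉ X}

/-- Connectedness of a multigraph. -/
def Connected (G : Multigraph V E) : Prop := ∀ u v : V, Nonempty (G.Walk u v)

/-- A `T`-path: a path connecting two distinct vertices of `T`
with no internal vertex in `T`. -/
structure TPath (G : Multigraph V E) (T : Set V) : Type (max u v) where
  first : V
  last : V
  walk : G.Walk first last
  first_mem : first ∈ T
  last_mem : last ∈ T
  ne : first ≠ last
  support_nodup : walk.support.Nodup
  internal : ∀ x ∈ walk.support, x ∈ T → x = first ∨ x = last

/-- A system of pairwise edge-disjoint `T`-paths. -/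
def TPathDisjoint (G : Multigraph V E) {T : Set V} (P : Set (G.TPath T)) : Prop :=
  ∀ p ∈ P, ∀ q ∈ P, p ≠ q → ∀ e, e ∈ p.walk.edges → e ∉ q.walk.edges

/-- An `st`-path: a path from `s` to `t` (no internal vertex is `s` or `t`,
which is automatic as the vertices of a path are distinct). -/
structure STPath (G : Multigraph V E) (s t : V) : Type (max u v) where
  walk : G.Walk s t
  support_nodup : walk.support.Nodup

/-- A system of pairwise edge-disjoint `st`-paths. -/
def STPathDisjoint (G : Multigraph V E) {s t : V} (P : Set (G.STPath s t)) : Prop :=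
  ∀ p ∈ P, ∀ q ∈ P, p ≠ q → ∀ e, e ∈ p.walk.edges → e ∉ q.walk.edges

/-- A nontrivial path starting at `s`. -/
structure SPath (G : Multigraph V E) (s : V) : Type (max u v) where
  last : V
  walk : G.Walk s last
  support_nodup : walk.support.Nodup
  edges_ne_nil : walk.edges ≠ []

/-- A system of pairwise edge-disjoint paths starting at `s`. -/
def SPathDisjoint (G : Multigraph V E) {s : V} (W : Set (G.SPath s)) : Prop :=
  ∀ p ∈ W, ∀ q ∈ W, p ≠ q → ∀ e, e ∈ p.walk.edges → e ∉ q.walk.edges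

/-- The set of last edges of a system of paths starting at `s`. -/
def lastEdges (G : Multigraph V E) {s : V} (W : Set (G.SPath s)) : Set E :=
  {e | ∃ p ∈ W, p.walk.edges.getLast? = some e}

/-- `C` is a cut separating `A` from `B`. -/
def SepCut (G : Multigraph V E) (A B : Set V) (C : Set E) : Prop :=
  ∃ X : Set V, A ⊆ X ∧ (∀ b ∈ B, b ∉ X) ∧ C = G.cut X

/-- `C` is a `⊆`-minimal cut separating `A` from `B`. -/
def IsMinSepCut (G : Multigraph V E) (A B : Set V) (C : Set E) : Prop :=
  G.SepCut A B C ∧ ∀ D : Set E, G.SepCut A B D → D ⊆ C → D = C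

/-- An `s`-`B`-wave: a system of pairwise edge-disjoint paths starting at `s`
whose set of last edges is a `⊆`-minimal cut separating `s` from `B`. -/
def IsWave (G : Multigraph V E) (s : V) (B : Set V) (W : Set (G.SPath s)) : Prop :=
  G.SPathDisjoint W ∧ G.IsMinSepCut {s} B (G.lastEdges W)

/-- An Erdős–Menger `st`-cut: an `st`-cut which is orthogonal to some system of
pairwise edge-disjoint `st`-paths, i.e. it consists of exactly one edge chosen
from each path of the system. -/
def IsEMCut (G : Multigraph V E) (s t : V) (C : Set E) : Prop :=
  (∃ X : Set V, s ∈ X ∧ t ∉ X ∧ C = G.cut X) ∧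
  ∃ P : Set (G.STPath s t), G.STPathDisjoint P ∧
    (∀ p ∈ P, ∃! e, e ∈ C ∧ e ∈ p.walk.edges) ∧
    (∀ e ∈ C, ∃ p ∈ P, e ∈ p.walk.edges)

/-- The order `≼` on `st`-cuts: the `s`-side of `C` is contained in the
`s`-side of `D` (in a connected graph the `s`-side is unique). -/
def CutLE (G : Multigraph V E) (s t : V) (C D : Set E) : Prop :=
  ∃ X Y : Set V, s ∈ X ∧ t ∉ X ∧ C = G.cut X ∧ s ∈ Y ∧ t ∉ Y ∧ D = G.cut Y ∧ X ⊆ Y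

/-- A cut of the form `C_W` for some `st`-wave `W`. -/
def IsWaveCut (G : Multigraph V E) (s t : V) (C : Set E) : Prop :=
  ∃ W : Set (G.SPath s), G.IsWave s {t} W ∧ G.lastEdges W = C

/-- Deletion of a set of edges. -/
def deleteEdges (G : Multigraph V E) (F : Set E) : Multigraph V {e : E // e ∉ F} where
  inc e := G.inc e.1
  not_isDiag e := G.not_isDiag e.1

open Classical in
/-- Contraction of the vertex set `X` to the vertex `s` (edges inside `X` are
deleted, edges leaving `X` are redirected to `s`). -/
noncomputable def contract (G : Multigraph V E) (X : Set V) (s : V) :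
    Multigraph V {e : E // ¬ (Sym2.map (fun v => if v ∈ X then s else v) (G.inc e)).IsDiag} where
  inc e := Sym2.map (fun v => if v ∈ X then s else v) (G.inc e.1)
  not_isDiag e := e.2

/-- Reachability inside a set `S` of vertices. -/
def ReachableIn (G : Multigraph V E) (S : Set V) (x y : V) : Prop :=
  ∃ p : G.Walk x y, ∀ z ∈ p.support, z ∈ S

/-- `Y` is (the vertex set of) a connected component of the subgraph of `G`
induced by `S`. -/
def IsComponentOf (G : Multigraph V E) (Y S : Set V) : Prop :=
  Y.Nonempty ∧ Y ⊆ S ∧ ∀ x ∈ Y, ∀ y ∈ S, (G.ReachableIn S x y ↔ y ∈ Y)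

/-- A cycle in a multigraph (a closed walk with distinct edges whose
vertices are distinct except that the first one equals the last one). -/
structure Cycle (G : Multigraph V E) : Type (max u v) where
  base : V
  walk : G.Walk base base
  edges_ne_nil : walk.edges ≠ []
  edges_nodup : walk.edges.Nodup
  support_tail_nodup : walk.support.tail.Nodup

/-- A graph is Eulerian if its edge set can be partitioned into
edge sets of cycles. -/
def IsEulerian (G : Multigraph V E) : Prop :=
  ∃ C : Set G.Cycle,
    (∀ c ∈ C, ∀ d ∈ C, c ≠ d → ∀ e, e ∈ c.walk.edges → e ∉ d.walk.edges) ∧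
    ∀ e : E, ∃ c ∈ C, e ∈ c.walk.edges

/-- A `T`-partition: a family `{A t : t ∈ T}` of pairwise disjoint vertex sets
with `A t ∩ T = {t}`. -/
def IsTPartition (T : Set V) (A : V → Set V) : Prop :=
  (∀ t ∈ T, A t ∩ T = {t}) ∧
  ∀ t₁ ∈ T, ∀ t₂ ∈ T, t₁ ≠ t₂ → Disjoint (A t₁) (A t₂)

end Multigraph

/-!
Identify all of `T` with `s`. The resulting graph has no odd finite cut, and such a graph splits
into countable edge sets without odd finite cuts. This is by induction on the number of edges: an
uncountable edge set is exhausted by a continuous chain of smaller sets `M` that are saturated, so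
that deleting finitely many edges of `M` separates no more in `M` than in the whole graph, and any
two vertices of `M` that remain linked outside `M` are infinitely edge-connected there. The former
makes the cuts of `M`, the latter those of its complement, even. The difference of consecutive
members of the chain therefore has even cuts as well.

Grouping the countable pieces so that none of them splits a given path from `s` reduces the theorem
to countable graphs, where the edges at `T` are covered one at a time. An edge at `t ∈ T` off the
given paths either starts a `T`-path avoiding them, or, by parity, leads to one of them; in that
case this path is rerouted to end in `t`. Removing the new path preserves all the hypotheses.
-/

open Cardinal

section SetSystems

variable {α : Type v} {Φ : Finset α → Set α} {F S : Set α}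

/-- Closure under the finitary rule producing the elements of `Φ A` from those of `A`. Nothing is
produced from the empty set, so that `∅` is closed under every rule. -/
def IsClosedUnder (Φ : Finset α → Set α) (M : Set α) : Prop :=
  ∀ A : Finset α, A.Nonempty → ↑A ⊆ M → Φ A ⊆ M

lemma isClosedUnder_iUnion_of_directed {ι : Type*} {M : ι → Set α} (hdir : Directed (· ⊆ ·) M)
    (hM : ∀ i, IsClosedUnder Φ (M i)) : IsClosedUnder Φ (⋃ i, M i) := by
  intro A hA hAM
  have : Nonempty ι := by
    obtain ⟨a, ha⟩ := hA
    exact (Set.mem_iUnion.1 (hAM ha)).nonempty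
  obtain ⟨i, hi⟩ := hdir.exists_mem_subset_of_finset_subset_biUnion hAM
  exact (hM i A hA hi).trans (Set.subset_iUnion M i)

lemma mk_iUnion_le_of_le {ι : Type u} {f : ι → Set α} {κ : Cardinal.{v}} (hκ : ℵ₀ ≤ κ)
    (hι : lift.{v} #ι ≤ lift.{u} κ) (hf : ∀ i, #(f i) ≤ κ) : #(⋃ i, f i) ≤ κ := by
  rw [← lift_le.{u}]
  exact (mk_iUnion_le_lift f).trans <| mul_le_of_le (aleph0_le_lift.2 hκ) hι <|
    ciSup_le' fun i => lift_le.2 (hf i)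

lemma mk_finset_le_max (β : Type v) : #(Finset β) ≤ max ℵ₀ #β := by
  classical
  exact (mk_le_of_surjective List.toFinset_surjective).trans (mk_list_le_max β)

lemma exists_consequences (hΦ : ∀ A, (Φ A).Countable) (hΦF : ∀ A, Φ A ⊆ F) (hS : S ⊆ F) :
    ∃ S', S ⊆ S' ∧ S' ⊆ F ∧ (∀ A : Finset α, ↑A ⊆ S → Φ A ⊆ S') ∧ #S' ≤ max ℵ₀ #S := by
  classical
  refine ⟨S ∪ ⋃ A : Finset S, Φ (A.map (.subtype _)), Set.subset_union_left,
    Set.union_subset hS (Set.iUnion_subset fun A => hΦF _), fun A hA => ?_, ?_⟩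
  · rw [← Finset.subtype_map_of_mem hA]
    exact Set.subset_union_of_subset_right (Set.subset_iUnion
      (fun A : Finset S => Φ (A.map (.subtype _))) (A.subtype (· ∈ S))) S
  · refine (mk_union_le _ _).trans (add_le_of_le (le_max_left _ _) (le_max_right _ _) ?_)
    exact mk_iUnion_le_of_le (le_max_left _ _) (lift_le.2 (mk_finset_le_max S))
      fun A => (hΦ _).le_aleph0.trans (le_max_left _ _)

lemma exists_isClosedUnder (hΦ : ∀ A, (Φ A).Countable) (hΦF : ∀ A, Φ A ⊆ F) (hS : S ⊆ F) :
    ∃ M, S ⊆ M ∧ M ⊆ F ∧ IsClosedUnder Φ M ∧ #M ≤ max ℵ₀ #S := by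
  choose! next le_next next_le consequences_le mk_next using
    fun (S : Set α) (hS : S ⊆ F) => exists_consequences hΦ hΦF hS
  set A : ℕ → Set α := fun n => next^[n] S
  have hA_succ : ∀ n, A (n + 1) = next (A n) := fun n => Function.iterate_succ_apply' next n S
  have hAF : ∀ n, A n ⊆ F := by
    intro n
    induction n with
    | zero => exact hS
    | succ n ih => exact hA_succ n ▸ next_le _ ih
  have hA_mono : Monotone A := monotone_nat_of_le_succ fun n => hA_succ n ▸ le_next _ (hAF n)
  have hA_card : ∀ n, #(A n) ≤ max ℵ₀ #S := by
    intro n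
    induction n with
    | zero => exact le_max_right _ _
    | succ n ih => exact hA_succ n ▸ (mk_next _ (hAF n)).trans (max_le (le_max_left _ _) ih)
  refine ⟨⋃ n, A n, Set.subset_iUnion A 0, Set.iUnion_subset hAF, fun B _ hB => ?_,
    mk_iUnion_le_of_le (le_max_left _ _) (by simp) hA_card⟩
  obtain ⟨n, hn⟩ := hA_mono.directed_le.exists_mem_subset_of_finset_subset_biUnion hB
  exact (consequences_le _ (hAF n) B hn).trans (hA_succ n ▸ Set.subset_iUnion A (n + 1))

section Stages

variable {ι : Type v} [LinearOrder ι]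

/-- The transfinite sequence whose `i`-th member is the union of all `g j (stage g j)` with `j < i`,
for an operation `g j` that enlarges sets. -/
def stage [WellFoundedLT ι] (g : ι → Set α → Set α) (i : ι) : Set α :=
  ⋃ j : Set.Iio i, g j (stage g j)
termination_by wellFounded_lt.wrap i
decreasing_by exact j.2

variable [WellFoundedLT ι] {g : ι → Set α → Set α}

lemma subset_stage {i j : ι} (hji : j < i) : g j (stage g j) ⊆ stage g i := by
  rw [stage.eq_def g i]
  exact Set.subset_iUnion (fun j : Set.Iio i => g j (stage g j)) ⟨j, hji⟩

lemma stage_subset (hg : ∀ i, ∀ S ⊆ F, g i S ⊆ F) (i : ι) : stage g i ⊆ F := by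
  induction i using WellFoundedLT.induction with
  | ind i ih =>
    rw [stage]
    exact Set.iUnion_subset fun j => hg j _ (ih j j.2)

lemma monotone_stage_succ (h : ∀ i, stage g i ⊆ g i (stage g i)) :
    Monotone fun i => g i (stage g i) := fun i j hij => by
  rcases hij.eq_or_lt with rfl | hlt
  · exact subset_rfl
  · exact (subset_stage hlt).trans (h j)

lemma pairwise_disjoint_stage_sdiff :
    Pairwise (Function.onFun Disjoint fun i => g i (stage g i) \ stage g i) := by
  refine (pairwise_disjoint_on _).2 fun i j hij => ?_
  exact Set.disjoint_left.2 fun e he he' => he'.2 (subset_stage hij he.1)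

lemma iUnion_stage_sdiff : ⋃ i, g i (stage g i) \ stage g i = ⋃ i, g i (stage g i) := by
  refine (Set.iUnion_mono fun i => Set.sdiff_subset).antisymm
    (Set.iUnion_subset fun i => ?_)
  induction i using WellFoundedLT.induction with
  | ind i ih =>
    intro e he
    by_cases hi : e ∈ stage g i
    · rw [stage] at hi
      obtain ⟨j, hj⟩ := Set.mem_iUnion.1 hi
      exact ih j j.2 hj
    · exact Set.mem_iUnion.2 ⟨i, he, hi⟩

lemma mk_stage_le (h : ∀ i, #(g i (stage g i)) ≤ max ℵ₀ #(stage g i)) (i : ι) :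
    #(stage g i) ≤ max ℵ₀ #(Set.Iio i) := by
  induction i using WellFoundedLT.induction with
  | ind i ih =>
    rw [stage]
    refine mk_iUnion_le_of_le (le_max_left _ _) (lift_le.2 (le_max_right _ _)) fun j => ?_
    refine (h j).trans (max_le (le_max_left _ _) ((ih j j.2).trans (max_le_max_left _ ?_)))
    exact mk_le_mk_of_subset (Set.Iio_subset_Iio (le_of_lt j.2))

end Stages

theorem exists_filtration {N : Set α → Set α} (hΦ : ∀ A, (Φ A).Countable) (hΦF : ∀ A, Φ A ⊆ F)
    (hN : ∀ M, #(N M) ≤ max ℵ₀ #M) (hNF : ∀ M, N M ⊆ F) (hF : ℵ₀ < #F) :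
    ∃ (ι : Type v) (M M' : ι → Set α),
      (∀ i, IsClosedUnder Φ (M i) ∧ IsClosedUnder Φ (M' i) ∧ M i ⊆ M' i ∧ N (M i) ⊆ M' i ∧
        M' i ⊆ F ∧ #(M' i) < #F) ∧
      Pairwise (Function.onFun Disjoint fun i => M' i \ M i) ∧ ⋃ i, M' i \ M i = F := by
  obtain ⟨_, _, hord⟩ := exists_ord_eq_type_lt F
  have exists_step : ∀ (i : F) (S : Set α), S ⊆ F → ∃ M, ↑i ∈ M ∧ S ⊆ M ∧ N S ⊆ M ∧ M ⊆ F ∧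
      IsClosedUnder Φ M ∧ #M ≤ max ℵ₀ #S := by
    intro i S hS
    obtain ⟨M, hSM, hMF, hM, hcard⟩ := exists_isClosedUnder hΦ hΦF
      (Set.insert_subset i.2 (Set.union_subset hS (hNF S)))
    rw [Set.insert_subset_iff, Set.union_subset_iff] at hSM
    refine ⟨M, hSM.1, hSM.2.1, hSM.2.2, hMF, hM, hcard.trans (max_le (le_max_left _ _) ?_)⟩
    have hunion : #↑(S ∪ N S) ≤ max ℵ₀ #S := (mk_union_le _ _).trans
      (add_le_of_le (le_max_left _ _) (le_max_right _ _) (hN S))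
    exact mk_insert_le.trans (add_le_of_le (le_max_left _ _) hunion
      (one_le_aleph0.trans (le_max_left _ _)))
  choose! g mem_g le_g N_le g_le g_closed mk_g using exists_step
  have hstage := stage_subset g_le
  have hlt : ∀ i, #(g i (stage g i)) < #F := fun i => by
    have hIio : #(Set.Iio i) < #F := mk_Iio_lt i hord
    have := mk_stage_le (fun i => mk_g i _ (hstage i)) i
    exact (mk_g i _ (hstage i)).trans_lt (max_lt hF (this.trans_lt (max_lt hF hIio)))
  have hclosed : ∀ i, IsClosedUnder Φ (stage g i) := fun i => by
    rw [stage]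
    exact isClosedUnder_iUnion_of_directed
      ((monotone_stage_succ fun i => le_g i _ (hstage i)).comp (Subtype.mono_coe _)).directed_le
      fun j => g_closed j _ (hstage j)
  refine ⟨F, stage g, fun i => g i (stage g i), fun i => ⟨hclosed i, g_closed i _ (hstage i),
    le_g i _ (hstage i), N_le i _ (hstage i), g_le i _ (hstage i), hlt i⟩,
    pairwise_disjoint_stage_sdiff, iUnion_stage_sdiff.trans ?_⟩
  refine (Set.iUnion_subset fun i => g_le i _ (hstage i)).antisymm fun e he => ?_
  exact Set.mem_iUnion.2 ⟨⟨e, he⟩, mem_g ⟨e, he⟩ _ (hstage _)⟩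

lemma exists_countable_partition_of_locally_countable {𝓢 : Set (Set α)}
    (hcount : ∀ s ∈ 𝓢, s.Countable) (hlocal : ∀ a, {s ∈ 𝓢 | a ∈ s}.Countable) :
    ∃ 𝓒 : Set (Set α), 𝓒.PairwiseDisjoint id ∧ ⋃₀ 𝓒 = Set.univ ∧
      ∀ c ∈ 𝓒, c.Countable ∧ ∀ s ∈ 𝓢, (s ∩ c).Nonempty → s ⊆ c := by
  let r : Setoid α := Relation.EqvGen.setoid fun a b => ∃ s ∈ 𝓢, a ∈ s ∧ b ∈ s
  have hr : ∀ {a b}, ∀ s ∈ 𝓢, a ∈ s → b ∈ s → r a b := fun s hs ha hb => .rel _ _ ⟨s, hs, ha, hb⟩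
  refine ⟨r.classes, (Setoid.isPartition_classes r).pairwiseDisjoint, Setoid.sUnion_classes r, ?_⟩
  rintro _ ⟨a, rfl⟩
  constructor
  · let Φ : Finset α → Set α := fun A => ⋃ b ∈ A, ⋃ s ∈ {s ∈ 𝓢 | b ∈ s}, s
    obtain ⟨M, haM, -, hM, hMcard⟩ := exists_isClosedUnder (Φ := Φ) (S := {a})
      (fun A => A.countable_toSet.biUnion fun b _ => (hlocal b).biUnion fun s hs => hcount s hs.1)
      (fun A => Set.subset_univ _) (Set.subset_univ _)
    have mem_of_mem : ∀ s ∈ 𝓢, ∀ b ∈ s, ∀ c ∈ s, b ∈ M → c ∈ M := fun s hs b hb c hc hbM =>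
      hM {b} (Finset.singleton_nonempty b) (by simpa using hbM)
        (Set.mem_biUnion (Finset.mem_singleton_self b) (Set.mem_biUnion ⟨hs, hb⟩ hc))
    have mem_iff : ∀ b c, r b c → (b ∈ M ↔ c ∈ M) := fun b c hbc => by
      induction hbc with
      | rel b c h =>
        obtain ⟨s, hs, hb, hc⟩ := h
        exact ⟨mem_of_mem s hs b hb c hc, mem_of_mem s hs c hc b hb⟩
      | refl b => rfl
      | symm b c _ ih => exact ih.symm
      | trans b c d _ _ ih ih' => exact ih.trans ih'
    have hMcount : M.Countable := le_aleph0_iff_set_countable.1 (by simpa using hMcard)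
    exact hMcount.mono fun b hb => (mem_iff b a hb).2 (haM rfl)
  · rintro s hs ⟨b, hbs, hb⟩ c hc
    exact Setoid.trans' r (hr s hs hc hbs) hb

lemma exists_pairwiseDisjoint_cover {ι : Type*} {f : ι → Set α} {P : Set α → Prop} {A : Set α}
    (hA : A.Countable) (hF : P F)
    (hstep : ∀ R, P R → ∀ e ∈ R ∩ A, ∃ i, e ∈ f i ∧ f i ⊆ R ∧ P (R \ f i)) :
    ∃ I : Set ι, I.PairwiseDisjoint f ∧ (∀ i ∈ I, f i ⊆ F) ∧ F ∩ A ⊆ ⋃ i ∈ I, f i := by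
  obtain rfl | hAne := A.eq_empty_or_nonempty
  · exact ⟨∅, Set.pairwiseDisjoint_empty, by simp, by simp⟩
  obtain ⟨e, rfl⟩ := hA.exists_eq_range hAne
  have hchoice : ∀ R, P R → ∀ n, ∃ J : Set ι, J.Subsingleton ∧ (∀ i ∈ J, f i ⊆ R) ∧
      P (R \ ⋃ i ∈ J, f i) ∧ e n ∉ R \ ⋃ i ∈ J, f i := by
    intro R hR n
    by_cases he : e n ∈ R
    · obtain ⟨i, hei, hi, hP⟩ := hstep R hR (e n) ⟨he, n, rfl⟩
      exact ⟨{i}, Set.subsingleton_singleton, by simpa using hi, by simpa using hP, by simp [hei]⟩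
    · exact ⟨∅, Set.subsingleton_empty, by simp, by simpa using hR, fun h => he h.1⟩
  choose! J hJsub hJR hJP hJe using hchoice
  let R : ℕ → Set α := fun n => n.rec F fun n S => S \ ⋃ i ∈ J S n, f i
  have hR : ∀ n, P (R n) := fun n => n.rec hF fun n ih => hJP _ ih n
  have hRanti : Antitone R := antitone_nat_of_succ_le fun n => Set.sdiff_subset
  have disjoint_of_lt : ∀ {m n}, m < n → ∀ i ∈ J (R m) m, ∀ j ∈ J (R n) n, Disjoint (f i) (f j) :=
    fun hmn i hi j hj => Set.disjoint_sdiff_right.mono (Set.subset_biUnion_of_mem hi)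
      ((hJR _ (hR _) _ j hj).trans (hRanti hmn))
  have subset_union : ∀ n, F ⊆ R n ∪ ⋃ i ∈ ⋃ m, J (R m) m, f i := by
    intro n
    induction n with
    | zero => exact Set.subset_union_left
    | succ n ih =>
      intro a ha
      by_cases haJ : a ∈ ⋃ i ∈ J (R n) n, f i
      · exact .inr (Set.biUnion_subset_biUnion_left
          (Set.subset_iUnion (fun m => J (R m) m) n) haJ)
      · exact (ih ha).imp_left fun haR => ⟨haR, haJ⟩
  refine ⟨⋃ n, J (R n) n, fun i hi j hj hij => ?_, fun i hi => ?_, ?_⟩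
  · obtain ⟨m, hm⟩ := Set.mem_iUnion.1 hi
    obtain ⟨n, hn⟩ := Set.mem_iUnion.1 hj
    rcases lt_trichotomy m n with hmn | rfl | hnm
    · exact disjoint_of_lt hmn i hm j hn
    · exact absurd (hJsub _ (hR m) m hm hn) hij
    · exact (disjoint_of_lt hnm j hn i hm).symm
  · obtain ⟨n, hn⟩ := Set.mem_iUnion.1 hi
    exact (hJR _ (hR n) n i hn).trans (hRanti n.zero_le)
  · rintro _ ⟨ha, n, rfl⟩
    exact (subset_union (n + 1) ha).resolve_left (hJe _ (hR n) n)

end SetSystems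

namespace Multigraph

section Boundary

variable {V : Type u} {E : Type v} {inc : E → Sym2 V} {R R' : Set E} {x y z : V}

/-- The edges with exactly one end in `X`. Loops are allowed, so that this notion is available after
identifying vertices; for a multigraph, `G.cut X` is `edgeBoundary G.inc X` by definition. -/
def edgeBoundary (inc : E → Sym2 V) (X : Set V) : Set E :=
  {e | ∃ x y, inc e = s(x, y) ∧ x ∈ X ∧ y ∉ X}

lemma mem_edgeBoundary_iff {e : E} (he : inc e = s(x, y)) (X : Set V) :
    e ∈ edgeBoundary inc X ↔ ¬(x ∈ X ↔ y ∈ X) := by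
  constructor
  · rintro ⟨a, b, hab, ha, hb⟩
    rcases Sym2.eq_iff.1 (he.symm.trans hab) with ⟨rfl, rfl⟩ | ⟨rfl, rfl⟩ <;> tauto
  · intro h
    by_cases hx : x ∈ X
    · exact ⟨x, y, he, hx, by tauto⟩
    · exact ⟨y, x, he.trans Sym2.eq_swap, by tauto, hx⟩

lemma exists_inc_eq (inc : E → Sym2 V) (e : E) : ∃ x y, inc e = s(x, y) :=
  (inc e).ind fun x y => ⟨x, y, rfl⟩

lemma edgeBoundary_compl (X : Set V) : edgeBoundary inc Xᶜ = edgeBoundary inc X := by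
  ext e
  obtain ⟨x, y, he⟩ := exists_inc_eq inc e
  simp only [mem_edgeBoundary_iff he, Set.mem_compl_iff, not_iff_not]

/-- `x` and `y` lie in the same component of the graph with edge set `R`: every vertex set
separating them is left by an edge of `R`. -/
def Linked (inc : E → Sym2 V) (R : Set E) (x y : V) : Prop :=
  ∀ X : Set V, x ∈ X → y ∉ X → (R ∩ edgeBoundary inc X).Nonempty

/-- `x` and `y` are infinitely edge-connected in the graph with edge set `R`. -/
def InfinitelyLinked (inc : E → Sym2 V) (R : Set E) (x y : V) : Prop :=
  ∀ X : Set V, x ∈ X → y ∉ X → (R ∩ edgeBoundary inc X).Infinite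

namespace Linked

protected lemma refl (x : V) : Linked inc R x x := fun _ hx hx' => absurd hx hx'

lemma mono (hR : R ⊆ R') (h : Linked inc R x y) : Linked inc R' x y := fun X hx hy =>
  (h X hx hy).mono (Set.inter_subset_inter_left _ hR)

protected lemma symm (h : Linked inc R x y) : Linked inc R y x := fun X hy hx =>
  edgeBoundary_compl (inc := inc) X ▸ h Xᶜ hx (not_not.2 hy)

protected lemma trans (hxy : Linked inc R x y) (hyz : Linked inc R y z) : Linked inc R x z := by
  intro X hx hz
  by_cases hy : y ∈ X
  · exact hyz X hy hz
  · exact hxy X hx hy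

end Linked

lemma InfinitelyLinked.mono (hR : R ⊆ R') (h : InfinitelyLinked inc R x y) :
    InfinitelyLinked inc R' x y := fun X hx hy =>
  (h X hx hy).mono (Set.inter_subset_inter_left _ hR)

lemma linked_of_mem {e : E} (heR : e ∈ R) (he : inc e = s(x, y)) : Linked inc R x y :=
  fun _ hx hy => ⟨e, heR, x, y, he, hx, hy⟩

lemma inter_edgeBoundary_setOf_linked (x : V) :
    R ∩ edgeBoundary inc {v | Linked inc R x v} = ∅ := by
  rw [← Set.not_nonempty_iff_eq_empty]
  rintro ⟨e, heR, a, b, he, ha, hb⟩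
  exact hb (Linked.trans ha (linked_of_mem heR he))

lemma Linked.exists_finite (h : Linked inc R x y) :
    ∃ S ⊆ R, S.Finite ∧ Linked inc S x y := by
  let X : Set V := {v | ∃ S ⊆ R, S.Finite ∧ Linked inc S x v}
  by_contra hy
  obtain ⟨e, heR, a, b, he, ⟨S, hSR, hS, ha⟩, hb⟩ :=
    h X ⟨∅, Set.empty_subset R, Set.finite_empty, Linked.refl x⟩ hy
  exact hb ⟨insert e S, Set.insert_subset heR hSR, hS.insert e,
    (ha.mono (Set.subset_insert e S)).trans (linked_of_mem (Set.mem_insert e S) he)⟩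

lemma exists_maximal_linking_family (F : Set E) (hxy : x ≠ y) :
    ∃ 𝓑 : Set (Set E), 𝓑.PairwiseDisjoint id ∧
      (∀ S ∈ 𝓑, S ⊆ F ∧ S.Finite ∧ Linked inc S x y) ∧ ¬ Linked inc (F \ ⋃₀ 𝓑) x y := by
  obtain ⟨𝓑, h𝓑⟩ := zorn_subset
    {𝓑 : Set (Set E) | 𝓑.PairwiseDisjoint id ∧ ∀ S ∈ 𝓑, S ⊆ F ∧ S.Finite ∧ Linked inc S x y}
    fun c hc hchain => ⟨⋃₀ c, ⟨(Set.pairwiseDisjoint_sUnion hchain.directedOn).2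
      fun 𝓑 h => (hc h).1, fun S ⟨𝓑, h, hS⟩ => (hc h).2 S hS⟩, fun _ => Set.subset_sUnion_of_mem⟩
  refine ⟨𝓑, h𝓑.prop.1, h𝓑.prop.2, fun hlinked => ?_⟩
  obtain ⟨S, hSF, hS, hSxy⟩ := hlinked.exists_finite
  have hSne : S.Nonempty := (hSxy {x} rfl hxy.symm).left
  have hdisj : ∀ B ∈ 𝓑, Disjoint S B := fun B hB =>
    (Set.subset_sdiff.1 hSF).2.mono_right (Set.subset_sUnion_of_mem hB)
  have hSmem : S ∈ 𝓑 := h𝓑.le_of_ge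
    ⟨h𝓑.prop.1.insert fun B hB _ => hdisj B hB, Set.forall_mem_insert.2
      ⟨⟨hSF.trans Set.sdiff_subset, hS, hSxy⟩, h𝓑.prop.2⟩⟩
    (Set.subset_insert S 𝓑) (Set.mem_insert S 𝓑)
  exact hSne.ne_empty (disjoint_self.1 (hdisj S hSmem))

lemma exists_countable_union_partition {𝓑 : Set (Set E)} (h𝓑 : 𝓑.PairwiseDisjoint id)
    (hinf : 𝓑.Infinite) :
    ∃ 𝓓 : Set (Set E), 𝓓.PairwiseDisjoint id ∧ ⋃₀ 𝓓 = ⋃₀ 𝓑 ∧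
      ∀ d ∈ 𝓓, ∃ b : ℕ → 𝓑, b.Injective ∧ d = ⋃ n, (b n : Set E) := by
  have : Infinite 𝓑 := hinf.to_subtype
  obtain ⟨φ⟩ : Nonempty (𝓑 × ℕ ≃ 𝓑) := Cardinal.eq.1 (by
    rw [mk_prod, lift_uzero, mk_nat, lift_aleph0, mk_mul_aleph0_eq])
  refine ⟨Set.range fun b => ⋃ n, (φ (b, n) : Set E), ?_, ?_, ?_⟩
  · rintro _ ⟨b, rfl⟩ _ ⟨c, rfl⟩ hbc
    simp only [Function.onFun, id, Set.disjoint_iUnion_left, Set.disjoint_iUnion_right]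
    refine fun n m => h𝓑 (φ _).2 (φ _).2 fun h => hbc ?_
    obtain rfl : b = c := congrArg Prod.fst (φ.injective (Subtype.ext h))
    rfl
  · rw [Set.sUnion_range, Set.sUnion_eq_iUnion,
      ← φ.surjective.iUnion_comp fun b : 𝓑 => (b : Set E), Set.iUnion_prod']
  · rintro _ ⟨b, rfl⟩
    exact ⟨fun n => φ (b, n), fun m n h => congrArg Prod.snd (φ.injective h), rfl⟩

lemma infinitelyLinked_iUnion {b : ℕ → Set E} (hb : Pairwise (Function.onFun Disjoint b))
    (hlinked : ∀ n, Linked inc (b n) x y) : InfinitelyLinked inc (⋃ n, b n) x y := by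
  intro X hx hy
  choose e he using fun n => hlinked n X hx hy
  refine Set.infinite_of_injective_forall_mem (f := e) (fun m n hmn => ?_)
    fun n => ⟨Set.mem_iUnion_of_mem n (he n).1, (he n).2⟩
  by_contra hne
  exact Set.disjoint_left.1 (hb hne) (he m).1 (hmn ▸ (he n).1)

lemma exists_separating_infinitelyLinked_family (F : Set E) (hxy : x ≠ y) :
    ∃ (C : Set E) (𝓓 : Set (Set E)), C ⊆ F ∧ C.Finite ∧ 𝓓.PairwiseDisjoint id ∧
      (∀ d ∈ 𝓓, d ⊆ F ∧ d.Countable ∧ InfinitelyLinked inc d x y) ∧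
      ¬ Linked inc (F \ (C ∪ ⋃₀ 𝓓)) x y := by
  obtain ⟨𝓑, hdisj, h𝓑, hsep⟩ := exists_maximal_linking_family (inc := inc) F hxy
  rcases 𝓑.finite_or_infinite with hfin | hinf
  · exact ⟨⋃₀ 𝓑, ∅, Set.sUnion_subset fun S hS => (h𝓑 S hS).1,
      hfin.sUnion fun S hS => (h𝓑 S hS).2.1, Set.pairwiseDisjoint_empty, by simp,
      by simpa using hsep⟩
  · obtain ⟨𝓓, h𝓓, hunion, hpieces⟩ := exists_countable_union_partition hdisj hinf
    refine ⟨∅, 𝓓, Set.empty_subset F, Set.finite_empty, h𝓓, fun d hd => ?_,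
      by simpa [hunion] using hsep⟩
    obtain ⟨b, hb, rfl⟩ := hpieces d hd
    exact ⟨Set.iUnion_subset fun n => (h𝓑 _ (b n).2).1,
      Set.countable_iUnion fun n => (h𝓑 _ (b n).2).2.1.countable,
      infinitelyLinked_iUnion
        (fun m n hmn => hdisj (b m).2 (b n).2 (Subtype.coe_ne_coe.2 (hb.ne hmn))) fun n =>
          (h𝓑 _ (b n).2).2.2⟩

end Boundary

section EvenCuts

variable {V : Type u} {E : Type v} {inc : E → Sym2 V} {F M R : Set E}

/-- No cut of the graph with edge set `F` has an odd finite number of edges. Infinite cuts are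
unconstrained, because `Set.ncard` sends infinite sets to `0`. -/
def HasEvenCuts (inc : E → Sym2 V) (F : Set E) : Prop :=
  ∀ X : Set V, Even (F ∩ edgeBoundary inc X).ncard

/-- The vertices covered by the edges in `M`. -/
def ends (inc : E → Sym2 V) (M : Set E) : Set V :=
  {x | ∃ e ∈ M, x ∈ inc e}

lemma even_ncard_of_finite {S : Set E} (h : S.Finite → Even S.ncard) : Even S.ncard := by
  by_cases hS : S.Finite
  · exact h hS
  · rw [Set.Infinite.ncard hS]; exact Even.zero

lemma HasEvenCuts.sUnion {𝓓 : Set (Set E)} (hdisj : 𝓓.PairwiseDisjoint id)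
    (h : ∀ d ∈ 𝓓, HasEvenCuts inc d) : HasEvenCuts inc (⋃₀ 𝓓) := by
  intro X
  refine even_ncard_of_finite fun hfin => ?_
  set f : Set E → Set E := fun d => d ∩ edgeBoundary inc X
  have hf : 𝓓.PairwiseDisjoint f := hdisj.mono fun d => Set.inter_subset_left
  have hunion : ⋃₀ 𝓓 ∩ edgeBoundary inc X = ⋃ d ∈ 𝓓, f d := by
    rw [Set.sUnion_eq_biUnion, Set.iUnion₂_inter]
  have hnonempty : ⋃ d ∈ 𝓓, f d = ⋃ d ∈ {d ∈ 𝓓 | (f d).Nonempty}, f d := by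
    ext e
    simp only [Set.mem_iUnion, Set.mem_ofPred_eq, exists_prop, and_assoc]
    exact exists_congr fun d => and_congr_right fun _ => ⟨fun he => ⟨⟨e, he⟩, he⟩, And.right⟩
  rw [hunion] at hfin ⊢
  obtain ⟨hfin_pieces, hfin_family⟩ := hf.finite_biUnion_iff.1 hfin
  rw [hnonempty, hfin_family.ncard_biUnion (fun d hd => hfin_pieces d hd.1)
    (hf.subset (Set.sep_subset _ _))]
  exact finsum_mem_induction Even Even.zero (fun _ _ => Even.add) fun d hd => h d hd.1 X

lemma HasEvenCuts.of_linked (hF : HasEvenCuts inc F) (hMF : M ⊆ F)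
    (h : ∀ x ∈ ends inc M, ∀ y ∈ ends inc M, ∀ C ⊆ M, C.Finite →
      Linked inc (F \ C) x y → Linked inc (M \ C) x y) : HasEvenCuts inc M := by
  intro Y
  refine even_ncard_of_finite fun hfin => ?_
  set C := M ∩ edgeBoundary inc Y
  -- Saturating `Y` along `F \ C` turns its cut in `M` into a cut of `F` with the same edges.
  let X : Set V := {v | ∃ x ∈ ends inc M ∩ Y, Linked inc (F \ C) x v}
  suffices F ∩ edgeBoundary inc X = C from this ▸ hF X
  apply Set.Subset.antisymm
  · rintro e ⟨heF, a, b, he, ⟨x, hx, ha⟩, hb⟩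
    by_contra heC
    exact hb ⟨x, hx, ha.trans (linked_of_mem ⟨heF, heC⟩ he)⟩
  · rintro e ⟨heM, a, b, he, ha, hb⟩
    refine ⟨hMF heM, a, b, he, ⟨a, ⟨⟨e, heM, he ▸ Sym2.mem_mk_left a b⟩, ha⟩, .refl a⟩, ?_⟩
    rintro ⟨x, ⟨hxM, hxY⟩, hxb⟩
    obtain ⟨f, ⟨hfM, hfC⟩, hfY⟩ := h x hxM b ⟨e, heM, he ▸ Sym2.mem_mk_right a b⟩ C
      Set.inter_subset_left hfin hxb Y hxY hb
    exact hfC ⟨hfM, hfY⟩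

lemma mem_iff_mem_of_inter_edgeBoundary_eq_empty {K : Set V} (hK : R ∩ edgeBoundary inc K = ∅)
    {e : E} (heR : e ∈ R) {x y : V} (he : inc e = s(x, y)) : x ∈ K ↔ y ∈ K := by
  have : e ∉ edgeBoundary inc K := fun h => hK.subset ⟨heR, h⟩
  simpa [mem_edgeBoundary_iff he] using this

lemma inter_edgeBoundary_inter {K : Set V} (hK : R ∩ edgeBoundary inc K = ∅) (Y : Set V) :
    R ∩ edgeBoundary inc (Y ∩ K) = R ∩ edgeBoundary inc (K \ Y) := by
  ext e
  refine and_congr_right fun heR => ?_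
  obtain ⟨x, y, he⟩ := exists_inc_eq inc e
  have := mem_iff_mem_of_inter_edgeBoundary_eq_empty hK heR he
  simp only [mem_edgeBoundary_iff he, Set.mem_inter_iff, Set.mem_sdiff]
  tauto

lemma inter_edgeBoundary_eq_union {K : Set V} (hK : R ∩ edgeBoundary inc K = ∅) (Y : Set V) :
    R ∩ edgeBoundary inc Y = R ∩ edgeBoundary inc (Y ∩ K) ∪ R ∩ edgeBoundary inc (Y \ K) := by
  rw [← Set.inter_union_distrib_left]
  ext e
  refine and_congr_right fun heR => ?_
  obtain ⟨x, y, he⟩ := exists_inc_eq inc e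
  have := mem_iff_mem_of_inter_edgeBoundary_eq_empty hK heR he
  simp only [mem_edgeBoundary_iff he, Set.mem_union, Set.mem_inter_iff, Set.mem_sdiff]
  tauto

lemma disjoint_edgeBoundary_inter_sdiff {K : Set V} (hK : R ∩ edgeBoundary inc K = ∅)
    (Y : Set V) :
    Disjoint (R ∩ edgeBoundary inc (Y ∩ K)) (R ∩ edgeBoundary inc (Y \ K)) := by
  rw [Set.disjoint_left]
  rintro e ⟨heR, hYK⟩ ⟨-, hY⟩
  obtain ⟨x, y, he⟩ := exists_inc_eq inc e
  have := mem_iff_mem_of_inter_edgeBoundary_eq_empty hK heR he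
  simp only [mem_edgeBoundary_iff he, Set.mem_inter_iff, Set.mem_sdiff] at hYK hY
  tauto

/-- As the cut is finite, `Y` does not separate two vertices of `M` lying in the same component `K`
of `F \ M`. Hence `Y ∩ K` or `K \ Y` avoids `M`, and its cut is a cut of `F`. -/
lemma even_ncard_inter_edgeBoundary_component (hF : HasEvenCuts inc F)
    (h : ∀ x ∈ ends inc M, ∀ y ∈ ends inc M, Linked inc (F \ M) x y →
      InfinitelyLinked inc (F \ M) x y) {Y : Set V} (hfin : ((F \ M) ∩ edgeBoundary inc Y).Finite)
    (a : V) : Even ((F \ M) ∩ edgeBoundary inc (Y ∩ {v | Linked inc (F \ M) a v})).ncard := by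
  set K : Set V := {v | Linked inc (F \ M) a v}
  have even_of_disjoint : ∀ Z : Set V, Disjoint Z (ends inc M) →
      Even ((F \ M) ∩ edgeBoundary inc Z).ncard := by
    intro Z hZ
    suffices (F \ M) ∩ edgeBoundary inc Z = F ∩ edgeBoundary inc Z from this ▸ hF Z
    refine (Set.inter_subset_inter_left _ Set.sdiff_subset).antisymm ?_
    rintro e ⟨heF, x, y, he, hx, hy⟩
    exact ⟨⟨heF, fun heM => Set.disjoint_left.1 hZ hx ⟨e, heM, he ▸ Sym2.mem_mk_left x y⟩⟩,
      x, y, he, hx, hy⟩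
  by_cases hYK : Disjoint (Y ∩ K) (ends inc M)
  · exact even_of_disjoint _ hYK
  · obtain ⟨x, ⟨hxY, hxK⟩, hxM⟩ := Set.not_disjoint_iff.1 hYK
    refine inter_edgeBoundary_inter (inter_edgeBoundary_setOf_linked a) Y ▸
      even_of_disjoint _ (Set.disjoint_left.2 fun y ⟨hyK, hyY⟩ hyM => ?_)
    exact h x hxM y hyM (hxK.symm.trans hyK) Y hxY hyY hfin

lemma HasEvenCuts.sdiff (hF : HasEvenCuts inc F)
    (h : ∀ x ∈ ends inc M, ∀ y ∈ ends inc M, Linked inc (F \ M) x y →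
      InfinitelyLinked inc (F \ M) x y) : HasEvenCuts inc (F \ M) := by
  intro Y
  induction hn : ((F \ M) ∩ edgeBoundary inc Y).ncard using Nat.strong_induction_on
    generalizing Y with
  | _ n ih =>
  subst hn
  refine even_ncard_of_finite fun hfin => ?_
  obtain hempty | ⟨e, heR, a, b, he, haY, hbY⟩ :=
    Set.eq_empty_or_nonempty ((F \ M) ∩ edgeBoundary inc Y)
  · rw [hempty, Set.ncard_empty]; exact Even.zero
  set K : Set V := {v | Linked inc (F \ M) a v}
  have hK : (F \ M) ∩ edgeBoundary inc K = ∅ := inter_edgeBoundary_setOf_linked a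
  have hunion := inter_edgeBoundary_eq_union hK Y
  have hfin_inter := hfin.subset (Set.subset_union_left.trans hunion.superset)
  have hcard : ((F \ M) ∩ edgeBoundary inc Y).ncard = _ := hunion ▸ Set.ncard_union_eq
    (disjoint_edgeBoundary_inter_sdiff hK Y) hfin_inter
    (hfin.subset (Set.subset_union_right.trans hunion.superset))
  have hpos : 0 < ((F \ M) ∩ edgeBoundary inc (Y ∩ K)).ncard :=
    (Set.ncard_pos hfin_inter).2 ⟨e, heR, a, b, he, ⟨haY, .refl a⟩, fun hb => hbY hb.1⟩
  rw [hcard]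
  exact (even_ncard_inter_edgeBoundary_component hF h hfin a).add
    (ih _ (by omega) (Y \ K) rfl)

end EvenCuts

section Decomposition

variable {V : Type u} {E : Type v} {inc : E → Sym2 V} {F M M' N : Set E} {x y : V}

/-- Between `x` and `y`, the part `M` of `F` inherits linkage from `F` even after deleting finitely
many edges, and whatever linkage remains outside `M` is infinite and carried by countably many
edges. -/
structure IsSaturatedBetween (inc : E → Sym2 V) (F M : Set E) (x y : V) : Prop where
  linked_sdiff : ∀ C ⊆ M, C.Finite → Linked inc (F \ C) x y → Linked inc (M \ C) x y
  exists_infinitelyLinked : Linked inc (F \ M) x y →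
    ∃ b ⊆ F \ M, b.Countable ∧ InfinitelyLinked inc b x y

/-- The part `M` of `F` is saturated between any two of its vertices. In the decomposition of `F`
into countable parts these are the sets that may be split off. -/
def IsSaturated (inc : E → Sym2 V) (F M : Set E) : Prop :=
  ∀ x ∈ ends inc M, ∀ y ∈ ends inc M, IsSaturatedBetween inc F M x y

lemma finite_ends (hM : M.Finite) : (ends inc M).Finite := by
  have : ends inc M = ⋃ e ∈ M, {x | x ∈ inc e} := by ext; simp [ends]
  rw [this]
  refine hM.biUnion fun e _ => ?_
  obtain ⟨x, y, he⟩ := exists_inc_eq inc e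
  exact (Set.toFinite {x, y}).subset fun z hz => Sym2.mem_iff.1 (he ▸ hz)

lemma exists_rule_isSaturatedBetween (F : Set E) (x y : V) :
    ∃ Ψ : Finset E → Set E, (∀ A, (Ψ A).Countable) ∧ (∀ A, Ψ A ⊆ F) ∧
      ∀ M : Set E, (∀ A : Finset E, ↑A ⊆ M → Ψ A ⊆ M) → IsSaturatedBetween inc F M x y := by
  classical
  obtain rfl | hxy := eq_or_ne x y
  · exact ⟨fun _ => ∅, fun _ => Set.countable_empty, fun _ => Set.empty_subset F, fun M _ =>
      ⟨fun _ _ _ _ => .refl x, fun _ => ⟨∅, Set.empty_subset _, Set.countable_empty,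
        fun _ hx hx' => absurd hx hx'⟩⟩⟩
  obtain ⟨C, 𝓓, hCF, hC, hdisj, h𝓓, hsep⟩ :=
    exists_separating_infinitelyLinked_family (inc := inc) F hxy
  have exists_link : ∀ A : Finset E, ∃ S ⊆ F \ A, S.Finite ∧
      (Linked inc (F \ A) x y → Linked inc S x y) := fun A => by
    by_cases h : Linked inc (F \ A) x y
    · obtain ⟨S, hS⟩ := h.exists_finite
      exact ⟨S, hS.1, hS.2.1, fun _ => hS.2.2⟩
    · exact ⟨∅, Set.empty_subset _, Set.finite_empty, fun h' => absurd h' h⟩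
  choose P hPF hP hPlinked using exists_link
  have hmeet : ∀ A : Finset E, {d ∈ 𝓓 | (d ∩ A).Nonempty}.Finite := fun A =>
    ((hdisj.mono fun d => (Set.inter_subset_left : d ∩ A ⊆ d)).finite_biUnion_iff.1
      (A.finite_toSet.subset (Set.iUnion₂_subset fun d _ => Set.inter_subset_right))).2
  refine ⟨fun A => C ∪ ⋃₀ {d ∈ 𝓓 | (d ∩ A).Nonempty} ∪ P A, fun A => ?_, fun A => ?_,
    fun M hM => ⟨fun D hDM hD hlinked => ?_, fun hlinked => ?_⟩⟩
  · exact (hC.countable.union ((hmeet A).countable.sUnion fun d hd => (h𝓓 d hd.1).2.1)).union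
      (hP A).countable
  · exact Set.union_subset (Set.union_subset hCF (Set.sUnion_subset fun d hd => (h𝓓 d hd.1).1))
      ((hPF A).trans Set.sdiff_subset)
  · lift D to Finset E using hD
    exact (hPlinked D hlinked).mono
      (Set.subset_sdiff.2 ⟨Set.subset_union_right.trans (hM D hDM), (Set.subset_sdiff.1 (hPF D)).2⟩)
  · by_contra hno
    refine hsep (hlinked.mono (Set.sdiff_subset_sdiff_right (Set.union_subset ?_ ?_)))
    · exact (Set.subset_union_left.trans Set.subset_union_left).trans (hM ∅ (by simp))
    · refine Set.sUnion_subset fun d hd => ?_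
      obtain ⟨hdF, hdcount, hdlinked⟩ := h𝓓 d hd
      obtain ⟨e, hed, heM⟩ : (d ∩ M).Nonempty := by
        rw [← Set.not_disjoint_iff_nonempty_inter]
        exact fun h => hno ⟨d, Set.subset_sdiff.2 ⟨hdF, h⟩, hdcount, hdlinked⟩
      have hd_meets : d ∈ {d ∈ 𝓓 | (d ∩ ({e} : Finset E)).Nonempty} := ⟨hd, e, hed, by simp⟩
      exact ((Set.subset_sUnion_of_mem hd_meets).trans Set.subset_union_right).trans
        (Set.subset_union_left.trans (hM {e} (by simpa using heM)))

lemma exists_rule_isSaturated (inc : E → Sym2 V) (F : Set E) :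
    ∃ Φ : Finset E → Set E, (∀ A, (Φ A).Countable) ∧ (∀ A, Φ A ⊆ F) ∧
      ∀ M : Set E, IsClosedUnder Φ M → IsSaturated inc F M := by
  classical
  choose Ψ hΨcount hΨF hΨ using exists_rule_isSaturatedBetween (inc := inc) F
  have hends : ∀ A : Finset E, (ends inc A).Countable := fun A =>
    (finite_ends A.finite_toSet).countable
  refine ⟨fun A => ⋃ x ∈ ends inc A, ⋃ y ∈ ends inc A, ⋃ B ∈ A.powerset, Ψ x y B,
    fun A => (hends A).biUnion fun x _ => (hends A).biUnion fun y _ =>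
      A.powerset.countable_toSet.biUnion fun B _ => hΨcount x y B,
    fun A => Set.iUnion₂_subset fun x _ => Set.iUnion₂_subset fun y _ =>
      Set.iUnion₂_subset fun B _ => hΨF x y B, ?_⟩
  rintro M hM x ⟨e, heM, hxe⟩ y ⟨f, hfM, hyf⟩
  refine hΨ x y M fun B hBM => ?_
  let A := insert e (insert f B)
  refine Set.Subset.trans ?_ (hM A (Finset.insert_nonempty _ _) (by
    simp only [A, Finset.coe_insert]
    exact Set.insert_subset heM (Set.insert_subset hfM hBM)))
  exact Set.subset_biUnion_of_mem (u := fun x => ⋃ y ∈ ends inc A, ⋃ B ∈ A.powerset, Ψ x y B)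
      (show x ∈ ends inc A from ⟨e, by simp [A], hxe⟩) |>.trans' <|
    Set.subset_biUnion_of_mem (u := fun y => ⋃ B ∈ A.powerset, Ψ x y B)
      (show y ∈ ends inc A from ⟨f, by simp [A], hyf⟩) |>.trans' <|
    Set.subset_biUnion_of_mem (u := fun B => Ψ x y B)
      (Finset.mem_powerset.2 ((Finset.subset_insert f B).trans (Finset.subset_insert e _)))

lemma exists_infinitelyLinked_witness (inc : E → Sym2 V) (F M : Set E) :
    ∃ N ⊆ F \ M, #N ≤ max ℵ₀ #M ∧ ∀ x ∈ ends inc M, ∀ y ∈ ends inc M,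
      (∃ b ⊆ F \ M, b.Countable ∧ InfinitelyLinked inc b x y) → InfinitelyLinked inc N x y := by
  have exists_witness : ∀ x y, ∃ b ⊆ F \ M, b.Countable ∧
      ((∃ b ⊆ F \ M, b.Countable ∧ InfinitelyLinked inc b x y) → InfinitelyLinked inc b x y) := by
    intro x y
    by_cases h : ∃ b ⊆ F \ M, b.Countable ∧ InfinitelyLinked inc b x y
    · exact h.imp fun b hb => ⟨hb.1, hb.2.1, fun _ => hb.2.2⟩
    · exact ⟨∅, Set.empty_subset _, Set.countable_empty, fun h' => absurd h' h⟩
  choose b hbF hbcount hb using exists_witness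
  refine ⟨⋃ e : M, ⋃ f : M, ⋃ x ∈ ends inc {e.1}, ⋃ y ∈ ends inc {f.1}, b x y, ?_, ?_, ?_⟩
  · exact Set.iUnion₂_subset fun e f => Set.iUnion₂_subset fun x _ => Set.iUnion₂_subset
      fun y _ => hbF x y
  · have hM : lift.{v} #M ≤ lift.{v} (max ℵ₀ #M) := lift_le.2 (le_max_right _ _)
    have hends : ∀ e : E, (ends inc {e}).Countable := fun e =>
      (finite_ends (Set.finite_singleton e)).countable
    exact mk_iUnion_le_of_le (le_max_left _ _) hM fun e => mk_iUnion_le_of_le (le_max_left _ _) hM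
      fun f => ((hends e).biUnion fun x _ => (hends f).biUnion fun y _ =>
        hbcount x y).le_aleph0.trans (le_max_left _ _)
  · rintro x ⟨e, heM, hxe⟩ y ⟨f, hfM, hyf⟩ h
    refine (hb x y h).mono fun g hg => ?_
    simp only [Set.mem_iUnion]
    exact ⟨⟨e, heM⟩, ⟨f, hfM⟩, x, ⟨e, rfl, hxe⟩, y, ⟨f, rfl, hyf⟩, hg⟩

lemma HasEvenCuts.sdiff_of_isSaturated (hF : HasEvenCuts inc F) (hM : IsSaturated inc F M)
    (hM' : IsSaturated inc F M') (hM'F : M' ⊆ F) (hNM : N ⊆ M' \ M)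
    (hN : ∀ x ∈ ends inc M, ∀ y ∈ ends inc M,
      (∃ b ⊆ F \ M, b.Countable ∧ InfinitelyLinked inc b x y) → InfinitelyLinked inc N x y) :
    HasEvenCuts inc (M' \ M) := by
  have hM'even : HasEvenCuts inc M' :=
    hF.of_linked hM'F fun x hx y hy => (hM' x hx y hy).linked_sdiff
  refine hM'even.sdiff fun x hx y hy hlinked => (hN x hx y hy ?_).mono hNM
  exact (hM x hx y hy).exists_infinitelyLinked (hlinked.mono (Set.sdiff_subset_sdiff_left hM'F))

theorem HasEvenCuts.exists_countable_partition (hF : HasEvenCuts inc F) :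
    ∃ 𝓓 : Set (Set E), 𝓓.PairwiseDisjoint id ∧ ⋃₀ 𝓓 = F ∧
      ∀ d ∈ 𝓓, d.Countable ∧ HasEvenCuts inc d := by
  induction hκ : #F using WellFoundedLT.induction generalizing F with
  | ind κ ih =>
  subst hκ
  rcases le_or_gt #F ℵ₀ with hcount | huncount
  · exact ⟨{F}, Set.pairwiseDisjoint_singleton F id, Set.sUnion_singleton F, by
      simpa [hF] using hcount⟩
  obtain ⟨Φ, hΦ, hΦF, hsat⟩ := exists_rule_isSaturated inc F
  choose N hNF hNcard hN using exists_infinitelyLinked_witness inc F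
  obtain ⟨ι, M, M', hM, hdisj, hunion⟩ :=
    exists_filtration hΦ hΦF hNcard (fun S => (hNF S).trans Set.sdiff_subset) huncount
  have hpieces : ∀ i, ∃ 𝓓 : Set (Set E), 𝓓.PairwiseDisjoint id ∧ ⋃₀ 𝓓 = M' i \ M i ∧
      ∀ d ∈ 𝓓, d.Countable ∧ HasEvenCuts inc d := by
    intro i
    obtain ⟨hMi, hM'i, -, hNi, hM'F, hcard⟩ := hM i
    exact ih _ ((mk_le_mk_of_subset Set.sdiff_subset).trans_lt hcard)
      (hF.sdiff_of_isSaturated (hsat _ hMi) (hsat _ hM'i) hM'F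
        (Set.subset_sdiff.2 ⟨hNi, (Set.subset_sdiff.1 (hNF _)).2⟩) (hN _)) rfl
  choose 𝓓 h𝓓disj h𝓓union h𝓓 using hpieces
  refine ⟨⋃ i, 𝓓 i, ?_, ?_, fun d hd => ?_⟩
  · intro d hd d' hd' hne
    obtain ⟨i, hi⟩ := Set.mem_iUnion.1 hd
    obtain ⟨j, hj⟩ := Set.mem_iUnion.1 hd'
    obtain rfl | hij := eq_or_ne i j
    · exact h𝓓disj i hi hj hne
    · exact (hdisj hij).mono ((Set.subset_sUnion_of_mem hi).trans (h𝓓union i).subset)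
        ((Set.subset_sUnion_of_mem hj).trans (h𝓓union j).subset)
  · rw [Set.sUnion_iUnion, ← hunion]
    exact Set.iUnion_congr h𝓓union
  · obtain ⟨i, hi⟩ := Set.mem_iUnion.1 hd
    exact h𝓓 i d hi

end Decomposition

section Paths

variable {V : Type u} {E : Type v} {G : Multigraph V E} {T : Set V} {R : Set E} {a b x : V}

namespace Walk

lemma start_mem_support (w : G.Walk a b) : a ∈ w.support := by
  cases w <;> simp [support]

lemma mem_support_of_mem_edges (w : G.Walk a b) {e : E} (he : e ∈ w.edges) (hx : x ∈ G.inc e) :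
    x ∈ w.support := by
  induction w with
  | nil => simp [edges] at he
  | cons f hf p ih =>
    obtain rfl | he := List.mem_cons.1 he
    · rw [hf, Sym2.mem_iff] at hx
      rcases hx with rfl | rfl <;> simp [support, start_mem_support]
    · exact List.mem_cons_of_mem _ (ih he)

lemma edges_nodup (w : G.Walk a b) (h : w.support.Nodup) : w.edges.Nodup := by
  induction w with
  | nil => exact List.nodup_nil
  | cons e he p ih =>
    obtain ⟨hu, hp⟩ := List.nodup_cons.1 h
    exact List.nodup_cons.2
      ⟨fun hm => hu (p.mem_support_of_mem_edges hm (he ▸ Sym2.mem_mk_left _ _)), ih hp⟩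

lemma exists_edge_at_start (w : G.Walk a b) (h : a ≠ b) : ∃ e ∈ w.edges, a ∈ G.inc e := by
  cases w with
  | nil => exact absurd rfl h
  | cons e he p => exact ⟨e, List.mem_cons_self, he ▸ Sym2.mem_mk_left _ _⟩

lemma exists_edge_at_end (w : G.Walk a b) (h : a ≠ b) : ∃ e ∈ w.edges, b ∈ G.inc e := by
  induction w with
  | nil => exact absurd rfl h
  | @cons u v w e he p ih =>
    obtain rfl | hv := eq_or_ne v w
    · exact ⟨e, List.mem_cons_self, he ▸ Sym2.mem_mk_right _ _⟩
    · obtain ⟨f, hf, hw⟩ := ih hv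
      exact ⟨f, List.mem_cons_of_mem _ hf, hw⟩

lemma eq_of_mem_edges_of_start_mem (w : G.Walk a b) (h : w.support.Nodup) {e f : E}
    (he : e ∈ w.edges) (hf : f ∈ w.edges) (hae : a ∈ G.inc e) (haf : a ∈ G.inc f) : e = f := by
  cases w with
  | nil => simp [edges] at he
  | cons g hg p =>
    have eq_of_start_mem : ∀ {i}, i ∈ (cons g hg p).edges → a ∈ G.inc i → i = g :=
      fun hi ha => (List.mem_cons.1 hi).resolve_right fun hi =>
        (List.nodup_cons.1 h).1 (p.mem_support_of_mem_edges hi ha)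
    rw [eq_of_start_mem he hae, eq_of_start_mem hf haf]

lemma exists_ne_edges_of_interior (w : G.Walk a b) (h : w.support.Nodup) (hx : x ∈ w.support)
    (hxa : x ≠ a) (hxb : x ≠ b) :
    ∃ e ∈ w.edges, ∃ f ∈ w.edges, e ≠ f ∧ x ∈ G.inc e ∧ x ∈ G.inc f := by
  induction w with
  | nil => exact absurd (List.mem_singleton.1 hx) hxa
  | @cons u v w e he p ih =>
    have hxp : x ∈ p.support := (List.mem_cons.1 hx).resolve_left hxa
    obtain ⟨hu, hp⟩ := List.nodup_cons.1 h
    obtain rfl | hxv := eq_or_ne x v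
    · obtain ⟨f, hf, hxf⟩ := p.exists_edge_at_start hxb
      refine ⟨e, List.mem_cons_self, f, List.mem_cons_of_mem _ hf, ?_,
        he ▸ Sym2.mem_mk_right _ _, hxf⟩
      rintro rfl
      exact hu (p.mem_support_of_mem_edges hf (he ▸ Sym2.mem_mk_left _ _))
    · obtain ⟨f, hf, g, hg, hfg⟩ := ih hp hxp hxv hxb
      exact ⟨f, List.mem_cons_of_mem _ hf, g, List.mem_cons_of_mem _ hg, hfg⟩

open Classical in
lemma even_countP_cut_iff (w : G.Walk a b) (X : Set V) :
    Even (w.edges.countP (· ∈ G.cut X)) ↔ (a ∈ X ↔ b ∈ X) := by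
  induction w with
  | nil => simp [edges]
  | @cons u v w e he p ih =>
    have hcut : e ∈ G.cut X ↔ ¬(u ∈ X ↔ v ∈ X) := mem_edgeBoundary_iff he X
    by_cases huv : u ∈ X ↔ v ∈ X
    · have hcount : (cons e he p).edges.countP (· ∈ G.cut X) = p.edges.countP (· ∈ G.cut X) :=
        List.countP_cons_of_neg (by simpa [hcut] using huv)
      rw [hcount, ih, huv]
    · have hcount : (cons e he p).edges.countP (· ∈ G.cut X) = p.edges.countP (· ∈ G.cut X) + 1 :=
        List.countP_cons_of_pos (by simpa [hcut] using huv)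
      rw [hcount, Nat.even_add_one, ih]
      tauto

lemma linked_of_mem_support (w : G.Walk a b) (hx : x ∈ w.support) :
    Linked G.inc {e | e ∈ w.edges} a x := by
  induction w with
  | nil => exact List.mem_singleton.1 hx ▸ .refl _
  | cons e he p ih =>
    obtain rfl | hx := List.mem_cons.1 hx
    · exact .refl _
    · exact (linked_of_mem (R := {i | i ∈ (cons e he p).edges}) List.mem_cons_self he).trans
        ((ih hx).mono fun _ => List.mem_cons_of_mem e)

lemma exists_suffix (w : G.Walk a b) (hx : x ∈ w.support) :
    ∃ q : G.Walk x b, q.support <:+ w.support ∧ q.edges <:+ w.edges := by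
  induction w with
  | nil =>
    obtain rfl := List.mem_singleton.1 hx
    exact ⟨.nil x, List.suffix_rfl, List.suffix_rfl⟩
  | @cons u v w e he p ih =>
    obtain rfl | hx := List.mem_cons.1 hx
    · exact ⟨.cons e he p, List.suffix_rfl, List.suffix_rfl⟩
    · obtain ⟨q, hsupport, hedges⟩ := ih hx
      exact ⟨q, hsupport.trans (List.suffix_cons u _), hedges.trans (List.suffix_cons e _)⟩

end Walk

lemma Linked.exists_path (h : Linked G.inc R a b) :
    ∃ w : G.Walk a b, w.support.Nodup ∧ ∀ e ∈ w.edges, e ∈ R := by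
  let X : Set V := {v | ∃ w : G.Walk v b, w.support.Nodup ∧ ∀ e ∈ w.edges, e ∈ R}
  have hb : b ∈ X := ⟨.nil b, by simp [Walk.support], by simp [Walk.edges]⟩
  by_contra ha
  obtain ⟨e, heR, y, x, he, ⟨w, hw, hwR⟩, hx⟩ := h.symm X hb ha
  apply hx
  by_cases hxw : x ∈ w.support
  · obtain ⟨q, hsupport, hedges⟩ := w.exists_suffix hxw
    exact ⟨q, hw.sublist hsupport.sublist, fun f hf => hwR f (hedges.subset hf)⟩
  · exact ⟨.cons e (he.trans Sym2.eq_swap) w, List.nodup_cons.2 ⟨hxw, hw⟩,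
      List.forall_mem_cons.2 ⟨heR, hwR⟩⟩

namespace TPath

/-- The set of edges of a `T`-path. -/
def edgeSet (p : G.TPath T) : Set E := {e | e ∈ p.walk.edges}

lemma finite_edgeSet (p : G.TPath T) : p.edgeSet.Finite := List.finite_toSet _

lemma exists_first_mem (p : G.TPath T) : ∃ e ∈ p.edgeSet, p.first ∈ G.inc e :=
  p.walk.exists_edge_at_start p.ne

lemma exists_last_mem (p : G.TPath T) : ∃ e ∈ p.edgeSet, p.last ∈ G.inc e :=
  p.walk.exists_edge_at_end p.ne

lemma even_ncard_edgeSet_inter_cut (p : G.TPath T) {X : Set V} (hX : X ⊆ Tᶜ) :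
    Even (p.edgeSet ∩ G.cut X).ncard := by
  classical
  have hcount : (p.edgeSet ∩ G.cut X).ncard = p.walk.edges.countP (· ∈ G.cut X) := by
    rw [List.countP_eq_length_filter,
      ← List.toFinset_card_of_nodup ((p.walk.edges_nodup p.support_nodup).filter _),
      ← Set.ncard_coe_finset]
    congr 1
    ext e
    simp [edgeSet]
  rw [hcount, p.walk.even_countP_cut_iff]
  exact iff_of_false (fun h => hX h p.first_mem) fun h => hX h p.last_mem

end TPath

lemma tPathDisjoint_iff {P : Set (G.TPath T)} :
    G.TPathDisjoint P ↔ P.PairwiseDisjoint TPath.edgeSet :=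
  ⟨fun h p hp q hq hpq => Set.disjoint_left.2 (h p hp q hq hpq),
    fun h _ hp _ hq hpq _ he he' => Set.disjoint_left.1 (h hp hq hpq) he he'⟩

lemma Linked.exists_tPath (h : Linked G.inc R a b) (ha : a ∈ T) (hb : b ∈ T) (hab : a ≠ b)
    (hdeg : ∀ x ∈ T, x ≠ a → x ≠ b → (R ∩ G.inci x).Subsingleton) :
    ∃ p : G.TPath T, p.first = a ∧ p.last = b ∧ p.edgeSet ⊆ R := by
  obtain ⟨w, hw, hwR⟩ := h.exists_path
  refine ⟨⟨a, b, w, ha, hb, hab, hw, fun x hx hxT => ?_⟩, rfl, rfl, hwR⟩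
  by_contra! hne
  obtain ⟨e, he, f, hf, hef, hxe, hxf⟩ := w.exists_ne_edges_of_interior hw hx hne.1 hne.2
  exact hef (hdeg x hxT hne.1 hne.2 ⟨hwR e he, hxe⟩ ⟨hwR f hf, hxf⟩)

end Paths

section Extraction

variable {V : Type u} {E : Type v} {G : Multigraph V E} {T : Set V} {s t : V} {F : Set E}

/-- A system of edge-disjoint `T`-paths inside `F` that start at `s` and cover the edges of `F`
at `s`. -/
structure IsStarCover (s : V) (F : Set E) (Ps : Set (G.TPath T)) : Prop where
  pairwiseDisjoint : Ps.PairwiseDisjoint TPath.edgeSet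
  first_eq : ∀ p ∈ Ps, p.first = s
  edgeSet_subset : ∀ p ∈ Ps, p.edgeSet ⊆ F
  inter_inci_subset : F ∩ G.inci s ⊆ ⋃ p ∈ Ps, p.edgeSet

/-- The invariant of the extraction of `T`-paths, for the graph with edge set `F`: no vertex set
avoiding `T` has an odd finite cut, and there is a star cover at `s`. -/
structure IsAdmissible (G : Multigraph V E) (T : Set V) (s : V) (F : Set E) : Prop where
  even_ncard_cut : ∀ X ⊆ Tᶜ, Even (F ∩ G.cut X).ncard
  exists_isStarCover : ∃ Ps : Set (G.TPath T), IsStarCover s F Ps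

lemma even_ncard_sdiff_edgeSet_inter_cut (hF : ∀ X ⊆ Tᶜ, Even (F ∩ G.cut X).ncard)
    {p : G.TPath T} (hp : p.edgeSet ⊆ F) : ∀ X ⊆ Tᶜ, Even ((F \ p.edgeSet) ∩ G.cut X).ncard := by
  intro X hX
  refine even_ncard_of_finite fun hfin => ?_
  have hsdiff : (F \ p.edgeSet) ∩ G.cut X = (F ∩ G.cut X) \ (p.edgeSet ∩ G.cut X) :=
    Set.inter_sdiff_distrib_right ..
  have hpfin : (p.edgeSet ∩ G.cut X).Finite := p.finite_edgeSet.inter_of_left _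
  rw [hsdiff] at hfin ⊢
  have hsub : p.edgeSet ∩ G.cut X ⊆ F ∩ G.cut X := Set.inter_subset_inter_left _ hp
  have hcard := Set.ncard_sdiff_add_ncard_of_subset hsub (hfin.of_sdiff hpfin)
  exact (Nat.even_add.1 (hcard ▸ hF X hX)).2 (p.even_ncard_edgeSet_inter_cut hX)

lemma exists_linked_of_forall_not_linked {U : Set E}
    (hF : ∀ X ⊆ Tᶜ, Even (F ∩ G.cut X).ncard) (htF : (F ∩ G.inci t).Subsingleton)
    {e : E} (he : e ∈ F \ U) (het : t ∈ G.inc e)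
    (hT : ∀ t' ∈ T, t' ≠ t → ¬ Linked G.inc (F \ U) t t') :
    ∃ f ∈ F ∩ U, ∃ x ∈ G.inc f, Linked G.inc (F \ U) t x := by
  -- Parity forces the cut of `X` to contain a second edge besides `e`.
  let X : Set V := {v | v ≠ t ∧ Linked G.inc (F \ U) t v}
  have hXT : X ⊆ Tᶜ := fun v hv hvT => hT v hvT hv.1 hv.2
  obtain ⟨y, hy⟩ := Sym2.mem_iff_exists.1 het
  have hyt : y ≠ t := by
    rintro rfl
    exact G.not_isDiag e (hy ▸ Sym2.mk_isDiag_iff.2 rfl)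
  have heX : e ∈ F ∩ G.cut X :=
    ⟨he.1, y, t, hy.trans Sym2.eq_swap, ⟨hyt, linked_of_mem he hy⟩, fun h => h.1 rfl⟩
  obtain ⟨f, ⟨hfF, x, z, hf, hx, hz⟩, hfe⟩ : ∃ f ∈ F ∩ G.cut X, f ≠ e := by
    by_contra! h
    have hsingle : F ∩ G.cut X = {e} := Set.eq_singleton_iff_unique_mem.2 ⟨heX, h⟩
    simpa [hsingle] using hF X hXT
  refine ⟨f, ⟨hfF, by_contra fun hfU => ?_⟩, x, hf ▸ Sym2.mem_mk_left x z, hx.2⟩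
  obtain rfl | hzt := eq_or_ne z t
  · exact hfe (htF ⟨hfF, show z ∈ G.inc f from hf ▸ Sym2.mem_mk_right x z⟩ ⟨he.1, het⟩)
  · exact hz ⟨hzt, hx.2.trans (linked_of_mem ⟨hfF, hfU⟩ hf)⟩

namespace IsStarCover

variable {Ps : Set (G.TPath T)} {p q : G.TPath T}

lemma sdiff_edgeSet (h : IsStarCover s F Ps) (hq : Disjoint (⋃ p ∈ Ps, p.edgeSet) q.edgeSet) :
    IsStarCover s (F \ q.edgeSet) Ps where
  pairwiseDisjoint := h.pairwiseDisjoint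
  first_eq := h.first_eq
  edgeSet_subset p hp := Set.subset_sdiff.2
    ⟨h.edgeSet_subset p hp, hq.mono_left (Set.subset_biUnion_of_mem hp)⟩
  inter_inci_subset _ he := h.inter_inci_subset ⟨he.1.1, he.2⟩

lemma sdiff_edgeSet_of_inter_inci_subset (h : IsStarCover s F Ps)
    (hpq : p.edgeSet ∩ G.inci s ⊆ q.edgeSet)
    (hq : ∀ p' ∈ Ps, p' ≠ p → Disjoint p'.edgeSet q.edgeSet) :
    IsStarCover s (F \ q.edgeSet) (Ps \ {p}) where
  pairwiseDisjoint := h.pairwiseDisjoint.subset Set.sdiff_subset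
  first_eq p' hp' := h.first_eq p' hp'.1
  edgeSet_subset p' hp' := Set.subset_sdiff.2 ⟨h.edgeSet_subset p' hp'.1, hq p' hp'.1 hp'.2⟩
  inter_inci_subset e he := by
    obtain ⟨p', hp', hep'⟩ := Set.mem_iUnion₂.1 (h.inter_inci_subset ⟨he.1.1, he.2⟩)
    refine Set.mem_biUnion (Set.mem_sdiff_singleton.2 ⟨hp', ?_⟩) hep'
    rintro rfl
    exact he.1.2 (hpq ⟨hep', he.2⟩)

lemma exists_tPath_exchange (h : IsStarCover s F Ps) (hs : s ∈ T)
    (hdeg : ∀ t ∈ T, t ≠ s → (G.inci t).Subsingleton) (hp : p ∈ Ps) (ht : t ∈ T) (hts : t ≠ s)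
    {x : V} (hx : x ∈ p.walk.support)
    (hlinked : Linked G.inc (F \ ⋃ p ∈ Ps, p.edgeSet) t x) :
    ∃ q : G.TPath T, q.last = t ∧ q.edgeSet ⊆ F ∧ p.edgeSet ∩ G.inci s ⊆ q.edgeSet ∧
      ∀ p' ∈ Ps, p' ≠ p → Disjoint p'.edgeSet q.edgeSet := by
  set U := ⋃ p ∈ Ps, p.edgeSet
  obtain rfl := h.first_eq p hp
  have hst : Linked G.inc (F \ U ∪ p.edgeSet) p.first t :=
    ((p.walk.linked_of_mem_support hx).mono Set.subset_union_right).trans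
      (hlinked.symm.mono Set.subset_union_left)
  obtain ⟨q, hqs, hqt, hq⟩ := hst.exists_tPath hs ht hts.symm fun x hx hxs _ =>
    (hdeg x hx hxs).anti Set.inter_subset_right
  refine ⟨q, hqt, hq.trans (Set.union_subset Set.sdiff_subset (h.edgeSet_subset p hp)), ?_,
    fun p' hp' hne => ?_⟩
  · rintro e ⟨hep, hes⟩
    obtain ⟨f, hfq, hfs⟩ := q.exists_first_mem
    rw [hqs] at hfs
    have hfp : f ∈ p.edgeSet :=
      (hq hfq).resolve_left fun hf => hf.2 (h.inter_inci_subset ⟨hf.1, hfs⟩)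
    exact p.walk.eq_of_mem_edges_of_start_mem p.support_nodup hep hfp hes hfs ▸ hfq
  · exact (Set.disjoint_union_right.2 ⟨Set.disjoint_sdiff_right.mono_left
      (Set.subset_biUnion_of_mem hp'), h.pairwiseDisjoint hp' hp hne⟩).mono_right hq

end IsStarCover

theorem IsAdmissible.exists_tPath_through (h : IsAdmissible G T s F) (hs : s ∈ T)
    (hdeg : ∀ t ∈ T, t ≠ s → (G.inci t).Subsingleton) (ht : t ∈ T) {e : E} (heF : e ∈ F)
    (het : t ∈ G.inc e) :
    ∃ q : G.TPath T, e ∈ q.edgeSet ∧ q.edgeSet ⊆ F ∧ IsAdmissible G T s (F \ q.edgeSet) := by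
  obtain ⟨hF, Ps, hPs⟩ := h
  set U := ⋃ p ∈ Ps, p.edgeSet
  by_cases heU : e ∈ U
  · obtain ⟨p, hp, hep⟩ := Set.mem_iUnion₂.1 heU
    have hpF := hPs.edgeSet_subset p hp
    exact ⟨p, hep, hpF, even_ncard_sdiff_edgeSet_inter_cut hF hpF, _,
      hPs.sdiff_edgeSet_of_inter_inci_subset Set.inter_subset_left
        fun p' hp' hne => hPs.pairwiseDisjoint hp' hp hne⟩
  have hts : t ≠ s := by
    rintro rfl
    exact heU (hPs.inter_inci_subset ⟨heF, het⟩)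
  have eq_of_mem_inc : ∀ {f}, t ∈ G.inc f → f = e := fun hf => hdeg t ht hts hf het
  by_cases hT : ∃ t' ∈ T, t' ≠ t ∧ Linked G.inc (F \ U) t t'
  · obtain ⟨t', ht', hne, hlinked⟩ := hT
    obtain ⟨q, rfl, rfl, hq⟩ := hlinked.exists_tPath ht ht' hne.symm fun x hx _ _ => by
      obtain rfl | hxs := eq_or_ne x s
      · exact fun f hf => absurd (hPs.inter_inci_subset ⟨hf.1.1, hf.2⟩) hf.1.2
      · exact (hdeg x hx hxs).anti Set.inter_subset_right
    have hqF := hq.trans Set.sdiff_subset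
    obtain ⟨g, hgq, hgt⟩ := q.exists_first_mem
    exact ⟨q, eq_of_mem_inc hgt ▸ hgq, hqF, even_ncard_sdiff_edgeSet_inter_cut hF hqF, Ps,
      hPs.sdiff_edgeSet (Set.disjoint_sdiff_right.mono_right hq)⟩
  · push Not at hT
    obtain ⟨f, ⟨-, hfU⟩, x, hxf, hx⟩ := exists_linked_of_forall_not_linked hF
      ((hdeg t ht hts).anti Set.inter_subset_right) ⟨heF, heU⟩ het hT
    obtain ⟨p, hp, hfp⟩ := Set.mem_iUnion₂.1 hfU
    obtain ⟨q, rfl, hqF, hpq, hq⟩ := hPs.exists_tPath_exchange hs hdeg hp ht hts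
      (p.walk.mem_support_of_mem_edges hfp hxf) hx
    obtain ⟨g, hgq, hgt⟩ := q.exists_last_mem
    exact ⟨q, eq_of_mem_inc hgt ▸ hgq, hqF, even_ncard_sdiff_edgeSet_inter_cut hF hqF, _,
      hPs.sdiff_edgeSet_of_inter_inci_subset hpq hq⟩

theorem IsAdmissible.exists_tPaths_of_countable (h : IsAdmissible G T s F) (hF : F.Countable)
    (hs : s ∈ T) (hdeg : ∀ t ∈ T, t ≠ s → (G.inci t).Subsingleton) :
    ∃ P : Set (G.TPath T), P.PairwiseDisjoint TPath.edgeSet ∧ (∀ p ∈ P, p.edgeSet ⊆ F) ∧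
      ∀ t ∈ T, F ∩ G.inci t ⊆ ⋃ p ∈ P, p.edgeSet := by
  obtain ⟨P, hdisj, hPF, hcover⟩ := exists_pairwiseDisjoint_cover (f := TPath.edgeSet (T := T))
    (P := IsAdmissible G T s) (hF.mono Set.inter_subset_left) h
    (A := F ∩ ⋃ t ∈ T, G.inci t) fun R hR e he => by
      obtain ⟨t, ht, het⟩ := Set.mem_iUnion₂.1 he.2.2
      exact hR.exists_tPath_through hs hdeg ht he.1 het
  exact ⟨P, hdisj, hPF, fun t ht e he => hcover ⟨he.1, he.1, Set.mem_biUnion ht he.2⟩⟩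

end Extraction

section Assembly

variable {V : Type u} {E : Type v} {G : Multigraph V E} {T : Set V} {s : V} {F : Set E}

lemma edgeBoundary_map {W : Type*} (q : V → W) (inc : E → Sym2 V) (X : Set W) :
    edgeBoundary (fun e => (inc e).map q) X = edgeBoundary inc (q ⁻¹' X) := by
  ext e
  obtain ⟨x, y, he⟩ := exists_inc_eq inc e
  rw [mem_edgeBoundary_iff he, mem_edgeBoundary_iff (by rw [he, Sym2.map_mk])]
  rfl

open Classical in
/-- The incidence map obtained by identifying all of `T` with `s`. Unlike `Multigraph.contract`, it
keeps the edges inside `T`, as loops, so that the edge type does not change. -/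
noncomputable def identifiedInc (G : Multigraph V E) (T : Set V) (s : V) : E → Sym2 V :=
  fun e => (G.inc e).map fun v => if v ∈ T then s else v

lemma hasEvenCuts_identifiedInc_iff (hs : s ∈ T) :
    HasEvenCuts (identifiedInc G T s) F ↔ ∀ X ⊆ Tᶜ, Even (F ∩ G.cut X).ncard := by
  classical
  set q : V → V := fun v => if v ∈ T then s else v
  have hq : ∀ v ∈ T, q v = s := fun v hv => if_pos hv
  have hmap : ∀ X, edgeBoundary (identifiedInc G T s) X = G.cut (q ⁻¹' X) :=
    edgeBoundary_map q G.inc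
  constructor
  · intro h X hX
    have hpre : q ⁻¹' X = X := by
      ext v
      by_cases hv : v ∈ T
      · exact iff_of_false (fun h => hX (hq v hv ▸ h) hs) fun h => hX h hv
      · simp [q, hv]
    simpa only [hmap, hpre] using h X
  · intro h
    have even_of_notMem : ∀ X, s ∉ X → Even (F ∩ edgeBoundary (identifiedInc G T s) X).ncard :=
      fun X hsX => hmap X ▸ h _ fun v hv hvT => hsX (hq v hvT ▸ hv)
    intro X
    by_cases hsX : s ∈ X
    · exact edgeBoundary_compl X ▸ even_of_notMem Xᶜ (not_not.2 hsX)
    · exact even_of_notMem X hsX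

/-- The graph with `T` identified to a point has countable pieces with even cuts; each piece meets
only countably many paths of the star cover, so grouping the pieces until no path is split keeps
them countable. -/
theorem IsAdmissible.exists_countable_partition (h : IsAdmissible G T s Set.univ) (hs : s ∈ T) :
    ∃ 𝓒 : Set (Set E), 𝓒.PairwiseDisjoint id ∧ ⋃₀ 𝓒 = Set.univ ∧
      ∀ c ∈ 𝓒, c.Countable ∧ IsAdmissible G T s c := by
  obtain ⟨hF, Ps, hPs⟩ := h
  obtain ⟨𝓓, h𝓓disj, h𝓓union, h𝓓⟩ :=
    ((hasEvenCuts_identifiedInc_iff hs).2 hF).exists_countable_partition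
  have hcount : ∀ S ∈ 𝓓 ∪ TPath.edgeSet '' Ps, S.Countable := by
    rintro _ (hd | ⟨p, -, rfl⟩)
    exacts [(h𝓓 _ hd).1, p.finite_edgeSet.countable]
  have hlocal : ∀ e, {S ∈ 𝓓 ∪ TPath.edgeSet '' Ps | e ∈ S}.Countable := by
    intro e
    have piece_unique : {d ∈ 𝓓 | e ∈ d}.Subsingleton := fun d hd d' hd' =>
      h𝓓disj.elim_set hd.1 hd'.1 e hd.2 hd'.2
    have path_unique : {S ∈ TPath.edgeSet '' Ps | e ∈ S}.Subsingleton := by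
      rintro _ ⟨⟨p, hp, rfl⟩, hep⟩ _ ⟨⟨p', hp', rfl⟩, hep'⟩
      rw [hPs.pairwiseDisjoint.elim_set hp hp' e hep hep']
    exact (piece_unique.finite.union path_unique.finite).countable.mono fun S hS =>
      hS.1.imp (⟨·, hS.2⟩) (⟨·, hS.2⟩)
  obtain ⟨𝓒, h𝓒disj, h𝓒union, h𝓒⟩ :=
    exists_countable_partition_of_locally_countable hcount hlocal
  refine ⟨𝓒, h𝓒disj, h𝓒union, fun c hc => ⟨(h𝓒 c hc).1, ?_⟩⟩
  have subset_of_meets : ∀ S ∈ 𝓓 ∪ TPath.edgeSet '' Ps, ∀ e ∈ S, e ∈ c → S ⊆ c :=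
    fun S hS e heS hec => (h𝓒 c hc).2 S hS ⟨e, heS, hec⟩
  have hc_eq : ⋃₀ {d ∈ 𝓓 | d ⊆ c} = c := by
    refine (Set.sUnion_subset fun d hd => hd.2).antisymm fun e he => ?_
    obtain ⟨d, hd, hed⟩ := h𝓓union.superset (Set.mem_univ e)
    exact ⟨d, ⟨hd, subset_of_meets d (.inl hd) e hed he⟩, hed⟩
  constructor
  · rw [← hasEvenCuts_identifiedInc_iff hs, ← hc_eq]
    exact .sUnion (h𝓓disj.subset (Set.sep_subset _ _)) fun d hd => (h𝓓 d hd.1).2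
  · refine ⟨{p ∈ Ps | p.edgeSet ⊆ c}, hPs.pairwiseDisjoint.subset (Set.sep_subset _ _),
      fun p hp => hPs.first_eq p hp.1, fun p hp => hp.2, fun e he => ?_⟩
    obtain ⟨p, hp, hep⟩ := Set.mem_iUnion₂.1 (hPs.inter_inci_subset ⟨Set.mem_univ e, he.2⟩)
    exact Set.mem_biUnion ⟨hp, subset_of_meets _ (.inr ⟨p, hp, rfl⟩) e hep he.1⟩ hep

theorem IsAdmissible.exists_tPaths (h : IsAdmissible G T s Set.univ) (hs : s ∈ T)
    (hdeg : ∀ t ∈ T, t ≠ s → (G.inci t).Subsingleton) :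
    ∃ P : Set (G.TPath T), P.PairwiseDisjoint TPath.edgeSet ∧
      ∀ t ∈ T, G.inci t ⊆ ⋃ p ∈ P, p.edgeSet := by
  obtain ⟨𝓒, h𝓒disj, h𝓒union, h𝓒⟩ := h.exists_countable_partition hs
  choose! P hPdisj hPc hPcover using fun c hc =>
    (h𝓒 c hc).2.exists_tPaths_of_countable (h𝓒 c hc).1 hs hdeg
  refine ⟨⋃ c ∈ 𝓒, P c, fun p hp p' hp' hne => ?_, fun t ht e he => ?_⟩
  · obtain ⟨c, hc, hpc⟩ := Set.mem_iUnion₂.1 hp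
    obtain ⟨c', hc', hpc'⟩ := Set.mem_iUnion₂.1 hp'
    obtain rfl | hcc' := eq_or_ne c c'
    · exact hPdisj c hc hpc hpc' hne
    · exact (h𝓒disj hc hc' hcc').mono (hPc c hc p hpc) (hPc c' hc' p' hpc')
  · obtain ⟨c, hc, hec⟩ := h𝓒union.superset (Set.mem_univ e)
    exact Set.biUnion_subset_biUnion_left (Set.subset_biUnion_of_mem hc)
      (hPcover c hc t ht ⟨hec, he⟩)

end Assembly

end Multigraph

/-- If some `s ∈ T` satisfies `d(t) ≤ 1` for every `t ∈ T − s`, no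
`X ⊆ V ∖ T` has odd finite cut, and there is a system of pairwise edge-disjoint
paths between `s` and `T − s` covering `δ(s)`, then there is a system of
pairwise edge-disjoint `T`-paths covering `⋃_{t ∈ T} δ(t)`. -/
theorem special_case_linked {V : Type u} {E : Type v} (G : Multigraph V E)
    (T : Set V) (s : V) (hs : s ∈ T)
    (hdeg : ∀ t ∈ T, t ≠ s → (G.inci t).Subsingleton)
    (hEul : ∀ X : Set V, X ⊆ Tᶜ → ¬ ((G.cut X).Finite ∧ Odd (G.cut X).ncard))
    (hPs : ∃ Ps : Set (G.TPath T), G.TPathDisjoint Ps ∧ (∀ p ∈ Ps, p.first = s) ∧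
      ∀ e ∈ G.inci s, ∃ p ∈ Ps, e ∈ p.walk.edges) :
    ∃ P : Set (G.TPath T), G.TPathDisjoint P ∧
      ∀ t ∈ T, ∀ e ∈ G.inci t, ∃ p ∈ P, e ∈ p.walk.edges := by
  obtain ⟨Ps, hdisj, hfirst, hcover⟩ := hPs
  have hG : G.IsAdmissible T s Set.univ := by
    refine ⟨fun X hX => Multigraph.even_ncard_of_finite fun hfin => ?_, Ps,
      Multigraph.tPathDisjoint_iff.1 hdisj, hfirst, fun p _ => Set.subset_univ _, fun e he => ?_⟩
    · rw [Set.univ_inter] at hfin ⊢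
      exact Nat.not_odd_iff_even.1 fun hodd => hEul X hX ⟨hfin, hodd⟩
    · obtain ⟨p, hp, hep⟩ := hcover e he.2
      exact Set.mem_biUnion hp hep
  obtain ⟨P, hP, hPcover⟩ := hG.exists_tPaths hs hdeg
  refine ⟨P, Multigraph.tPathDisjoint_iff.2 hP, fun t ht e he => ?_⟩
  obtain ⟨p, hp, hep⟩ := Set.mem_iUnion₂.1 (hPcover t ht he)
  exact ⟨p, hp, hep⟩
end

section
/- Let H be a (possibly infinite) graph, let s, t ∈ V(H) be distinct, suppose there is a system 𝒫 of pairwise edge-disjoint st-paths in H covering δ_H(s), and suppose there is an edge e ∈ E(H)∖δ_H(s) that is used by every system of pairwise edge-disjoint st-paths covering δ_H(s). Then there exists an s-tight Erdős–Menger st-cut C containing e. -/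
/-!
Common definitions: multigraphs (parallel edges allowed, no loops), walks,
paths, cuts, waves and related notions used in the statements below.
-/

universe u v

/-!
Let `P` be a system of edge-disjoint `st`-paths covering `δ(s)`, and let `u` be the vertex from
which it enters `e`. Stop the path through `e` at `u` and let `X` consist of `s` and of all
vertices reachable from `u`, without using `e`, in the residual graph of the stopped system.
Augmenting along a residual walk from `u` to `t` would give a covering system avoiding `e`, so
`t ∉ X`; hence `P` uses every edge of `δ(X)` outwards, and `e ∈ δ(X)`.

In an infinite graph tightness does not follow by counting. Instead `X` turns out not to depend
on `P`: if `X` is obtained from another covering system `Q` and a residual walk of `P` leaves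
`X`, follow the paths of `P` until they leave `X` and then those of `Q`. The resulting covering
system still admits the residual walk up to its exit from `X`, and from there the unused
remainder of a path of `Q` leads to `t`, a contradiction.
-/

namespace Multigraph

variable {V : Type u} {E : Type v} {H : Multigraph V E}

/-- An edge together with one of its two orientations, the arcs of which residual graphs consist. -/
structure Dart (H : Multigraph V E) where
  tail : V
  head : V
  edge : E
  inc_edge : H.inc edge = s(tail, head)

namespace Dart

/-- The dart with the same edge and the opposite orientation. -/
def symm (d : H.Dart) : H.Dart where
  tail := d.head
  head := d.tail
  edge := d.edge
  inc_edge := d.inc_edge.trans Sym2.eq_swap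

lemma eq_or_eq_symm_of_edge_eq {d d' : H.Dart} (h : d.edge = d'.edge) : d = d' ∨ d = d'.symm := by
  obtain ⟨x, y, g, hg⟩ := d
  obtain ⟨x', y', g', hg'⟩ := d'
  obtain rfl : g = g' := h
  rcases Sym2.eq_iff.1 (hg.symm.trans hg') with ⟨rfl, rfl⟩ | ⟨rfl, rfl⟩
  · exact Or.inl rfl
  · exact Or.inr rfl

lemma head_ne_tail (d : H.Dart) : d.head ≠ d.tail := fun h =>
  H.not_isDiag d.edge (by rw [d.inc_edge, h]; exact Sym2.mk_isDiag_iff.2 rfl)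

lemma edge_mem_inci_iff {d : H.Dart} {v : V} : d.edge ∈ H.inci v ↔ v = d.tail ∨ v = d.head := by
  change v ∈ H.inc d.edge ↔ _
  rw [d.inc_edge, Sym2.mem_iff]

lemma edge_mem_cut_iff {d : H.Dart} {X : Set V} :
    d.edge ∈ H.cut X ↔ (d.tail ∈ X ∧ d.head ∉ X) ∨ (d.head ∈ X ∧ d.tail ∉ X) := by
  constructor
  · rintro ⟨x, y, h, hx, hy⟩
    rcases Sym2.eq_iff.1 (d.inc_edge.symm.trans h) with ⟨rfl, rfl⟩ | ⟨rfl, rfl⟩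
    · exact Or.inl ⟨hx, hy⟩
    · exact Or.inr ⟨hx, hy⟩
  · rintro (⟨hx, hy⟩ | ⟨hx, hy⟩)
    · exact ⟨_, _, d.inc_edge, hx, hy⟩
    · exact ⟨_, _, d.symm.inc_edge, hx, hy⟩

lemma edge_ne_of_ends_mem {X : Set V} {x y : H.Dart} (hx : x.tail ∈ X ∧ x.head ∈ X)
    (hy : y.tail ∉ X ∨ y.head ∉ X) : x.edge ≠ y.edge := fun h => by
  rcases eq_or_eq_symm_of_edge_eq h with rfl | rfl
  · exact hy.elim (· hx.1) (· hx.2)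
  · exact hy.elim (· hx.2) (· hx.1)

end Dart

/-- `IsWalk a l b`: the darts in `l` are traversed in this order by a walk from `a` to `b`.
Unlike `Walk`, this has no end-vertices in a type, so walks with varying ends form families. -/
def IsWalk : V → List H.Dart → V → Prop
  | a, [], b => a = b
  | a, d :: l, b => d.tail = a ∧ IsWalk d.head l b

lemma isWalk_append {a b : V} {l m : List H.Dart} :
    IsWalk a (l ++ m) b ↔ ∃ c, IsWalk a l c ∧ IsWalk c m b := by
  induction l generalizing a with
  | nil => simp [IsWalk]
  | cons d l ih => simp [IsWalk, ih, and_assoc]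

lemma isWalk_append_cons {a b : V} {l m : List H.Dart} {d : H.Dart} :
    IsWalk a (l ++ d :: m) b ↔ IsWalk a l d.tail ∧ IsWalk d.head m b := by
  simp [isWalk_append, IsWalk]

lemma IsWalk.append_singleton {a : V} {l : List H.Dart} {d : H.Dart} (h : IsWalk a l d.tail) :
    IsWalk a (l ++ [d]) d.head :=
  isWalk_append_cons.2 ⟨h, rfl⟩

lemma IsWalk.exists_eq_cons {a b : V} {l : List H.Dart} (h : IsWalk a l b) (hab : b ≠ a) :
    ∃ d m, l = d :: m ∧ d.tail = a := by
  cases l with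
  | nil => exact absurd h.symm hab
  | cons d m => exact ⟨d, m, rfl, h.1⟩

lemma IsWalk.forall_ends_mem {a b : V} {l : List H.Dart} {X : Set V} (h : IsWalk a l b) (ha : a ∈ X)
    (hX : ∀ d ∈ l, d.tail ∈ X → d.head ∈ X) : ∀ d ∈ l, d.tail ∈ X ∧ d.head ∈ X := by
  induction l generalizing a with
  | nil => simp
  | cons d l ih =>
    obtain ⟨rfl, hl⟩ := h
    obtain ⟨hd, hX⟩ := List.forall_mem_cons.1 hX
    exact List.forall_mem_cons.2 ⟨⟨ha, hd ha⟩, ih hl (hd ha) hX⟩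

lemma IsWalk.exists_exit {a b : V} {l : List H.Dart} {X : Set V} (h : IsWalk a l b) (ha : a ∈ X)
    (hb : b ∉ X) : ∃ l₁ d l₂, l = l₁ ++ d :: l₂ ∧ (∀ x ∈ l₁, x.tail ∈ X ∧ x.head ∈ X) ∧
      d.tail ∈ X ∧ d.head ∉ X := by
  induction l generalizing a with
  | nil => exact absurd (show a = b from h) (by rintro rfl; exact hb ha)
  | cons d l ih =>
    obtain ⟨rfl, hl⟩ := h
    by_cases hd : d.head ∈ X
    · obtain ⟨l₁, d', l₂, rfl, hin, hout⟩ := ih hl hd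
      exact ⟨d :: l₁, d', l₂, rfl, List.forall_mem_cons.2 ⟨⟨ha, hd⟩, hin⟩, hout⟩
    · exact ⟨[], d, l, rfl, by simp, ha, hd⟩

namespace Walk

/-- The list of darts traversed by a walk. -/
def darts : ∀ {a b : V}, H.Walk a b → List H.Dart
  | _, _, .nil _ => []
  | a, _, .cons (v := v) e he p => ⟨a, v, e, he⟩ :: p.darts

lemma map_edge_darts {a b : V} (p : H.Walk a b) : p.darts.map Dart.edge = p.edges := by
  induction p with
  | nil => rfl
  | cons e he p ih => simp [darts, edges, ih]

lemma mem_edges_iff {a b : V} {p : H.Walk a b} {g : E} :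
    g ∈ p.edges ↔ ∃ d ∈ p.darts, d.edge = g := by
  rw [← map_edge_darts, List.mem_map]

lemma isWalk_darts {a b : V} (p : H.Walk a b) : IsWalk a p.darts b := by
  induction p with
  | nil => rfl
  | cons e he p ih => exact ⟨rfl, ih⟩

lemma start_mem_support_s17 {a b : V} (p : H.Walk a b) : a ∈ p.support := by
  cases p <;> simp [support]

lemma mem_support_of_mem_darts {a b : V} {p : H.Walk a b} {d : H.Dart} (hd : d ∈ p.darts) :
    d.tail ∈ p.support ∧ d.head ∈ p.support := by
  induction p with
  | nil => simp [darts] at hd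
  | cons e he p ih =>
    rcases List.mem_cons.1 hd with rfl | hd
    · exact ⟨List.mem_cons_self, List.mem_cons_of_mem _ p.start_mem_support_s17⟩
    · exact (ih hd).imp (List.mem_cons_of_mem _) (List.mem_cons_of_mem _)

lemma edges_nodup_of_support_nodup {a b : V} {p : H.Walk a b} (h : p.support.Nodup) :
    p.edges.Nodup := by
  induction p with
  | nil => exact List.nodup_nil
  | @cons u v w e he p ih =>
    obtain ⟨hu, hp⟩ := List.nodup_cons.1 h
    refine List.nodup_cons.2 ⟨fun hmem => hu ?_, ih hp⟩
    obtain ⟨d, hd, rfl⟩ := mem_edges_iff.1 hmem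
    have hud : u = d.tail ∨ u = d.head := by
      refine Dart.edge_mem_inci_iff.1 (show u ∈ H.inc d.edge from ?_)
      exact he ▸ Sym2.mem_mk_left u v
    rcases hud with rfl | rfl
    · exact (mem_support_of_mem_darts hd).1
    · exact (mem_support_of_mem_darts hd).2

lemma exists_suffix_of_mem_support {a b x : V} (p : H.Walk a b) (hx : x ∈ p.support) :
    ∃ q : H.Walk x b, q.support <:+ p.support ∧ q.darts <:+ p.darts := by
  induction p with
  | nil v =>
    obtain rfl := List.mem_singleton.1 hx
    exact ⟨.nil x, List.suffix_rfl, List.suffix_rfl⟩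
  | cons e he p ih =>
    rcases List.mem_cons.1 hx with rfl | hx
    · exact ⟨.cons e he p, List.suffix_rfl, List.suffix_rfl⟩
    · obtain ⟨q, hsupp, hdarts⟩ := ih hx
      exact ⟨q, hsupp.trans (List.suffix_cons _ _), hdarts.trans (List.suffix_cons _ _)⟩

end Walk

lemma IsWalk.exists_path {a b : V} {l : List H.Dart} (h : IsWalk a l b) :
    ∃ p : H.Walk a b, p.support.Nodup ∧ p.darts ⊆ l := by
  induction l generalizing a with
  | nil =>
    obtain rfl : a = b := h
    exact ⟨.nil a, List.nodup_singleton a, List.nil_subset _⟩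
  | cons d l ih =>
    obtain ⟨rfl, hl⟩ := h
    obtain ⟨p, hp, hpl⟩ := ih hl
    by_cases hd : d.tail ∈ p.support
    · obtain ⟨q, hsupp, hdarts⟩ := p.exists_suffix_of_mem_support hd
      exact ⟨q, hp.sublist hsupp.sublist,
        fun x hx => List.mem_cons_of_mem _ (hpl (hdarts.subset hx))⟩
    · exact ⟨.cons d.edge d.inc_edge p, List.nodup_cons.2 ⟨hd, hp⟩, List.cons_subset_cons d hpl⟩

lemma IsWalk.exists_nodup {a b : V} {l : List H.Dart} (h : IsWalk a l b) :
    ∃ m : List H.Dart, m.Nodup ∧ m ⊆ l ∧ IsWalk a m b := by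
  obtain ⟨p, hp, hpl⟩ := h.exists_path
  refine ⟨p.darts, .of_map Dart.edge ?_, hpl, p.isWalk_darts⟩
  rw [p.map_edge_darts]
  exact Walk.edges_nodup_of_support_nodup hp

/-! ### Linkages -/

/-- A linkage: a family of pairwise edge-disjoint trails starting at `s`, one for each edge at `s`,
the trail indexed by `a` containing `a` and ending in `dest a`. For constant `dest` these are
the systems covering `δ(s)`; augmentation also needs those in which one trail stops early. -/
structure IsLinkage {s : V} (dest : H.inci s → V) (F : H.inci s → List H.Dart) : Prop where
  isWalk : ∀ a, IsWalk s (F a) (dest a)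
  nodup : ∀ a, ((F a).map Dart.edge).Nodup
  exists_edge_eq : ∀ a, ∃ d ∈ F a, d.edge = a
  index_eq : ∀ a b, ∀ d ∈ F a, ∀ d' ∈ F b, d.edge = d'.edge → a = b

variable {s t : V} {dest : H.inci s → V} {F : H.inci s → List H.Dart}

namespace IsLinkage

lemma dart_eq (hF : IsLinkage dest F) {a b : H.inci s} {d d' : H.Dart} (hd : d ∈ F a)
    (hd' : d' ∈ F b) (h : d.edge = d'.edge) : d = d' := by
  obtain rfl := hF.index_eq a b d hd d' hd' h
  exact List.inj_on_of_nodup_map (hF.nodup a) hd hd' h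

lemma exists_edge_eq_of_isWalk (hF : IsLinkage dest F) {a : H.inci s} {l : List H.Dart} {y : V}
    (hl : IsWalk s l y) (hy : y ≠ s)
    (hown : ∀ d ∈ l, ∀ b, ∀ d' ∈ F b, d.edge = d'.edge → b = a) :
    ∃ d m, l = d :: m ∧ d.tail = s ∧ d.edge = a := by
  obtain ⟨d, m, rfl, hds⟩ := hl.exists_eq_cons hy
  obtain ⟨d', hd', hedge⟩ := hF.exists_edge_eq ⟨d.edge, Dart.edge_mem_inci_iff.2 (.inl hds.symm)⟩
  exact ⟨d, m, rfl, hds, congrArg Subtype.val (hown d List.mem_cons_self _ d' hd' hedge.symm)⟩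

lemma exists_mem_tail_eq (hF : IsLinkage dest F) (hdest : ∀ a, dest a ≠ s) (a : H.inci s) :
    ∃ d ∈ F a, d.tail = s ∧ d.edge = a := by
  obtain ⟨d, m, hm, hds, hda⟩ := hF.exists_edge_eq_of_isWalk (hF.isWalk a) (hdest a)
    fun d hd b d' hd' h => hF.index_eq b a d' hd' d hd h.symm
  exact ⟨d, hm ▸ List.mem_cons_self, hds, hda⟩

lemma head_ne (hF : IsLinkage dest F) (hdest : ∀ a, dest a ≠ s) {a : H.inci s} {d : H.Dart}
    (hd : d ∈ F a) : d.head ≠ s := by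
  intro hs
  obtain ⟨d', hd', hds, hedge⟩ := hF.exists_mem_tail_eq hdest
    ⟨d.edge, Dart.edge_mem_inci_iff.2 (.inr hs.symm)⟩
  exact d.head_ne_tail (hs.trans (hds.symm.trans (congrArg Dart.tail (hF.dart_eq hd' hd hedge))))

lemma update [DecidableEq E] (hF : IsLinkage dest F) (a : H.inci s) {l : List H.Dart} {y : V}
    (hl : IsWalk s l y) (hy : y ≠ s) (hnodup : (l.map Dart.edge).Nodup)
    (hown : ∀ d ∈ l, ∀ b, ∀ d' ∈ F b, d.edge = d'.edge → b = a) :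
    IsLinkage (Function.update dest a y) (Function.update F a l) where
  isWalk b := by
    rcases eq_or_ne b a with rfl | hb
    · simpa using hl
    · simpa [hb] using hF.isWalk b
  nodup := (Function.forall_update_iff F fun _ m => (m.map Dart.edge).Nodup).2
    ⟨hnodup, fun b _ => hF.nodup b⟩
  exists_edge_eq := by
    refine (Function.forall_update_iff F fun b m => ∃ d ∈ m, d.edge = b).2
      ⟨?_, fun b _ => hF.exists_edge_eq b⟩
    obtain ⟨d, m, rfl, -, hda⟩ := hF.exists_edge_eq_of_isWalk hl hy hown
    exact ⟨d, List.mem_cons_self, hda⟩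
  index_eq b c d hd d' hd' h := by
    rcases eq_or_ne b a with hb | hb <;> rcases eq_or_ne c a with hc | hc
    · exact hb.trans hc.symm
    · exact hb.trans (hown d (by simpa [hb] using hd) c d' (by simpa [hc] using hd') h).symm
    · exact (hown d' (by simpa [hc] using hd') b d (by simpa [hb] using hd) h.symm).trans hc.symm
    · exact hF.index_eq b c d (by simpa [hb] using hd) d' (by simpa [hc] using hd') h

lemma update_of_eq_append [DecidableEq E] (hF : IsLinkage dest F) {a : H.inci s} {l m : List H.Dart}
    {y : V} (ha : F a = l ++ m) (hl : IsWalk s l y) (hy : y ≠ s) :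
    IsLinkage (Function.update dest a y) (Function.update F a l) := by
  refine hF.update a hl hy ?_ fun d hd b d' hd' h => ?_
  · have := hF.nodup a
    rw [ha, List.map_append] at this
    exact this.of_append_left
  · exact hF.index_eq b a d' hd' d (ha ▸ List.mem_append_left m hd) h.symm

end IsLinkage

namespace IsLinkage

lemma exists_append_dart [DecidableEq E] {a : H.inci s} {d : H.Dart}
    (hF : IsLinkage (Function.update (fun _ => t) a d.tail) F) (hds : d.head ≠ s)
    (hnew : ∀ b, ∀ d' ∈ F b, d'.edge ≠ d.edge) :
    ∃ F' : H.inci s → List H.Dart, IsLinkage (Function.update (fun _ => t) a d.head) F' ∧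
      ∀ c, ∀ d' ∈ F' c, d' = d ∨ ∃ c', d' ∈ F c' := by
  have hwalk : IsWalk s (F a ++ [d]) d.head := by
    refine IsWalk.append_singleton ?_
    simpa using hF.isWalk a
  have hnodup : ((F a ++ [d]).map Dart.edge).Nodup := by
    simpa [List.nodup_append, hF.nodup a] using hnew a
  have hown : ∀ d₁ ∈ F a ++ [d], ∀ b, ∀ d' ∈ F b, d₁.edge = d'.edge → b = a := by
    intro d₁ hd₁ b d' hd' h
    rcases List.mem_append.1 hd₁ with hd₁ | hd₁
    · exact hF.index_eq b a d' hd' d₁ hd₁ h.symm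
    · obtain rfl := List.mem_singleton.1 hd₁
      exact absurd h.symm (hnew b d' hd')
  refine ⟨_, by simpa using hF.update a hwalk hds hnodup hown, ?_⟩
  refine (Function.forall_update_iff F fun _ m => ∀ d' ∈ m, d' = d ∨ ∃ c', d' ∈ F c').2
    ⟨fun d' hd' => ?_, fun c _ d' hd' => Or.inr ⟨c, hd'⟩⟩
  rcases List.mem_append.1 hd' with hd' | hd'
  · exact Or.inr ⟨a, hd'⟩
  · exact Or.inl (List.mem_singleton.1 hd')

lemma exchange [DecidableEq E] (hF : IsLinkage dest F) {a b : H.inci s} (hab : a ≠ b)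
    {l m : List H.Dart} {d : H.Dart} (hb : F b = l ++ d :: m) (hd : d.head = dest a)
    (hds : d.tail ≠ s) (hbs : dest b ≠ s) :
    IsLinkage (Function.update (Function.update dest b d.tail) a (dest b))
      (Function.update (Function.update F b l) a (F a ++ m)) := by
  have hm : m ⊆ F b := by simp [hb]
  have hwalk := isWalk_append_cons.1 (hb ▸ hF.isWalk b)
  have hnodup_b : (l.map Dart.edge ++ d.edge :: m.map Dart.edge).Nodup := by
    simpa [hb] using hF.nodup b
  have hwalk_a : IsWalk s (F a ++ m) (dest b) :=
    isWalk_append.2 ⟨dest a, hF.isWalk a, hd ▸ hwalk.2⟩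
  have hnodup_a : ((F a ++ m).map Dart.edge).Nodup := by
    rw [List.map_append, List.nodup_append']
    refine ⟨hF.nodup a, hnodup_b.of_append_right.of_cons, fun g hg hg' => hab ?_⟩
    obtain ⟨d₁, hd₁, rfl⟩ := List.mem_map.1 hg
    obtain ⟨d₂, hd₂, h⟩ := List.mem_map.1 hg'
    exact hF.index_eq a b d₁ hd₁ d₂ (hm hd₂) h.symm
  refine (hF.update_of_eq_append hb hwalk.1 hds).update a hwalk_a hbs hnodup_a ?_
  intro d₁ hd₁ c d' hd' h
  rcases eq_or_ne c b with rfl | hcb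
  · rw [Function.update_self] at hd'
    have hd'c : d' ∈ F c := by simp [hb, hd']
    rcases List.mem_append.1 hd₁ with hd₁ | hd₁
    · exact hF.index_eq c a d' hd'c d₁ hd₁ h.symm
    · exact ((List.nodup_append'.1 hnodup_b).2.2 (List.mem_map_of_mem hd')
        (List.mem_cons_of_mem _ (h ▸ List.mem_map_of_mem hd₁))).elim
  · rw [Function.update_of_ne hcb] at hd'
    rcases List.mem_append.1 hd₁ with hd₁ | hd₁
    · exact hF.index_eq c a d' hd' d₁ hd₁ h.symm
    · exact absurd (hF.index_eq c b d' hd' d₁ (hm hd₁) h.symm) hcb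

/- If the trail of `b` traverses `d` backwards, then the trail that stops at `d.tail` takes over
the rest of the trail of `b`, which now stops at `d.head`. -/
lemma exists_reroute [DecidableEq E] {a b : H.inci s} {d : H.Dart}
    (hF : IsLinkage (Function.update (fun _ => t) a d.tail) F) (hst : t ≠ s)
    (hds : d.head ≠ s) (hb : d.symm ∈ F b) :
    ∃ F' : H.inci s → List H.Dart, IsLinkage (Function.update (fun _ => t) b d.head) F' ∧
      ∀ c, ∀ d' ∈ F' c, ∃ c', d' ∈ F c' := by
  obtain ⟨l, m, hlm⟩ := List.append_of_mem hb
  have hsub : ∀ c, ∀ d' ∈ Function.update F b l c, ∃ c', d' ∈ F c' :=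
    (Function.forall_update_iff F fun _ m => ∀ d' ∈ m, ∃ c', d' ∈ F c').2
      ⟨fun d' hd' => ⟨b, by simp [hlm, hd']⟩, fun c _ d' hd' => ⟨c, hd'⟩⟩
  rcases eq_or_ne a b with rfl | hab
  · have hl : IsWalk s l d.head := (isWalk_append_cons.1 (hlm ▸ hF.isWalk a)).1
    exact ⟨_, by simpa using hF.update_of_eq_append hlm hl hds, hsub⟩
  · have hF' := hF.exchange hab hlm (by simp [Dart.symm]) hds (by simpa [hab.symm] using hst)
    rw [Function.update_of_ne hab.symm, Function.update_comm hab.symm, Function.update_idem,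
      Function.update_eq_self_iff.2 rfl] at hF'
    refine ⟨_, hF', (Function.forall_update_iff _ fun _ m => ∀ d' ∈ m, ∃ c', d' ∈ F c').2
      ⟨fun d' hd' => ?_, fun c _ => hsub c⟩⟩
    rcases List.mem_append.1 hd' with hd' | hd'
    · exact ⟨a, hd'⟩
    · exact ⟨b, by simp [hlm, hd']⟩

lemma exists_augment_dart [DecidableEq E] {a : H.inci s} {d : H.Dart}
    (hF : IsLinkage (Function.update (fun _ => t) a d.tail) F) (hst : t ≠ s)
    (hds : d.head ≠ s) (hdF : ∀ b, d ∉ F b) :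
    ∃ b, ∃ F' : H.inci s → List H.Dart, IsLinkage (Function.update (fun _ => t) b d.head) F' ∧
      ∀ c, ∀ d' ∈ F' c, d' = d ∨ ∃ c', d' ∈ F c' := by
  by_cases hnew : ∀ b, ∀ d' ∈ F b, d'.edge ≠ d.edge
  · exact ⟨a, hF.exists_append_dart hds hnew⟩
  · push Not at hnew
    obtain ⟨b, d', hd', hedge⟩ := hnew
    rcases Dart.eq_or_eq_symm_of_edge_eq hedge with rfl | rfl
    · exact absurd hd' (hdF b)
    · obtain ⟨F', hF', hsub⟩ := hF.exists_reroute hst hds hd'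
      exact ⟨b, F', hF', fun c d' hd' => Or.inr (hsub c d' hd')⟩

lemma exists_augment [DecidableEq E] {x y : V} {a : H.inci s} {w : List H.Dart}
    (hF : IsLinkage (Function.update (fun _ => t) a x) F) (hst : t ≠ s) (hw : IsWalk x w y)
    (hnodup : w.Nodup) (hws : ∀ d ∈ w, d.head ≠ s) (hwF : ∀ d ∈ w, ∀ b, d ∉ F b) :
    ∃ b, ∃ F' : H.inci s → List H.Dart, IsLinkage (Function.update (fun _ => t) b y) F' ∧
      ∀ c, ∀ d ∈ F' c, d ∈ w ∨ ∃ c', d ∈ F c' := by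
  induction w generalizing x a F with
  | nil =>
    obtain rfl : x = y := hw
    exact ⟨a, F, hF, fun c d hd => Or.inr ⟨c, hd⟩⟩
  | cons d w ih =>
    obtain ⟨rfl, hw⟩ := hw
    obtain ⟨hdw, hnodup⟩ := List.nodup_cons.1 hnodup
    obtain ⟨hds, hws⟩ := List.forall_mem_cons.1 hws
    obtain ⟨hdF, hwF⟩ := List.forall_mem_cons.1 hwF
    obtain ⟨b, F₁, hF₁, hsub₁⟩ := hF.exists_augment_dart hst hds hdF
    obtain ⟨b', F₂, hF₂, hsub₂⟩ := ih hF₁ hw hnodup hws fun d' hd' c hc => by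
      rcases hsub₁ c d' hc with rfl | ⟨c', hc'⟩
      · exact hdw hd'
      · exact hwF d' hd' c' hc'
    refine ⟨b', F₂, hF₂, fun c d' hd' => ?_⟩
    rcases hsub₂ c d' hd' with h | ⟨c', hc'⟩
    · exact Or.inl (List.mem_cons_of_mem d h)
    · exact (hsub₁ c' d' hc').imp_left fun h => List.mem_cons.2 (Or.inl h)

end IsLinkage

/-! ### Linkages saturating a vertex set -/

/-- Every edge of `δ(X)` is traversed by the family `F` in the direction leaving `X`. -/
def Saturates {ι : Type*} (F : ι → List H.Dart) (X : Set V) : Prop :=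
  ∀ d : H.Dart, d.tail ∈ X → d.head ∉ X → ∃ a, d ∈ F a

namespace IsLinkage

variable {X : Set V}

lemma head_notMem_of_tail_notMem (hF : IsLinkage dest F) (hX : Saturates F X) {a : H.inci s}
    {d : H.Dart} (hd : d ∈ F a) (ht : d.tail ∉ X) : d.head ∉ X := by
  intro hh
  obtain ⟨b, hb⟩ := hX d.symm hh ht
  have hsymm : d = d.symm := hF.dart_eq hd hb rfl
  exact d.head_ne_tail (congrArg Dart.tail hsymm).symm

lemma outside_of_exit (hF : IsLinkage dest F) (hX : Saturates F X) {a : H.inci s} {d : H.Dart}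
    {l m : List H.Dart} (ha : F a = l ++ d :: m) (hd : d.head ∉ X) :
    ∀ x ∈ m, x.tail ∉ X ∧ x.head ∉ X :=
  (isWalk_append_cons.1 (ha ▸ hF.isWalk a)).2.forall_ends_mem (X := Xᶜ) hd fun x hx =>
    hF.head_notMem_of_tail_notMem hX (a := a) (by simp [ha, hx])

lemma eq_of_exit (hF : IsLinkage dest F) (hX : Saturates F X) {a : H.inci s} {d d' : H.Dart}
    (hd : d ∈ F a) (hdt : d.tail ∈ X) (hdh : d.head ∉ X) (hd' : d' ∈ F a) (hdt' : d'.tail ∈ X)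
    (hdh' : d'.head ∉ X) : d = d' := by
  obtain ⟨l, m, ha⟩ := List.append_of_mem hd
  rw [ha] at hd'
  rcases List.mem_append.1 hd' with hl | hm
  · obtain ⟨l₁, l₂, rfl⟩ := List.append_of_mem hl
    rw [List.append_assoc, List.cons_append] at ha
    exact absurd hdt (hF.outside_of_exit hX ha hdh' d (by simp)).1
  · rcases List.mem_cons.1 hm with h | hm
    · exact h.symm
    · exact absurd hdt' (hF.outside_of_exit hX ha hdh d' hm).1

lemma tail_mem_of_edge_mem_cut (hF : IsLinkage dest F) (hX : Saturates F X) {a : H.inci s}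
    {d : H.Dart} (hd : d ∈ F a) (hcut : d.edge ∈ H.cut X) : d.tail ∈ X ∧ d.head ∉ X :=
  (Dart.edge_mem_cut_iff.1 hcut).resolve_right fun h =>
    hF.head_notMem_of_tail_notMem hX hd h.2 h.1

lemma existsUnique_edge_mem_cut (hF : IsLinkage dest F) (hX : Saturates F X) (hs : s ∈ X)
    {a : H.inci s} (ha : dest a ∉ X) : ∃! f, f ∈ H.cut X ∧ ∃ d ∈ F a, d.edge = f := by
  obtain ⟨l, d, m, hl, -, hdt, hdh⟩ := (hF.isWalk a).exists_exit hs ha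
  have hd : d ∈ F a := by simp [hl]
  refine ⟨d.edge, ⟨Dart.edge_mem_cut_iff.2 (.inl ⟨hdt, hdh⟩), d, hd, rfl⟩, ?_⟩
  rintro _ ⟨hcut, d', hd', rfl⟩
  obtain ⟨hdt', hdh'⟩ := hF.tail_mem_of_edge_mem_cut hX hd' hcut
  exact congrArg Dart.edge (hF.eq_of_exit hX hd' hdt' hdh' hd hdt hdh)

end IsLinkage

lemma Saturates.exists_edge_eq {ι : Type*} {F : ι → List H.Dart} {X : Set V}
    (hX : Saturates F X) {f : E} (hf : f ∈ H.cut X) : ∃ a, ∃ d ∈ F a, d.edge = f := by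
  obtain ⟨x, y, hxy, hx, hy⟩ := hf
  obtain ⟨a, ha⟩ := hX ⟨x, y, f, hxy⟩ hx hy
  exact ⟨a, _, ha, rfl⟩

/-- The trail `r` follows `p` up to its first exit from `X` and continues along `q`, which uses
the same dart to leave `X` and stays outside `X` from then on. -/
def IsSplice (X : Set V) (p q r : List H.Dart) : Prop :=
  ∃ l d k m n, p = l ++ d :: k ∧ q = m ++ d :: n ∧ r = l ++ d :: n ∧
    (∀ x ∈ l, x.tail ∈ X ∧ x.head ∈ X) ∧ d.tail ∈ X ∧ d.head ∉ X ∧ ∀ x ∈ n, x.tail ∉ X ∧ x.head ∉ X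

namespace IsSplice

variable {X : Set V} {p q r : List H.Dart} {x : H.Dart}

lemma mem_left (h : IsSplice X p q r) (hx : x ∈ r) (hxX : x.tail ∈ X ∨ x.head ∈ X) : x ∈ p := by
  obtain ⟨l, d, k, m, n, rfl, rfl, rfl, -, -, -, hn⟩ := h
  have := hn x
  grind

lemma mem_right (h : IsSplice X p q r) (hx : x ∈ r) (hxX : x.tail ∉ X ∨ x.head ∉ X) : x ∈ q := by
  obtain ⟨l, d, k, m, n, rfl, rfl, rfl, hl, -, -, -⟩ := h
  have := hl x
  grind

lemma exists_exit (h : IsSplice X p q r) : ∃ d, d ∈ p ∧ d ∈ q ∧ d.tail ∈ X ∧ d.head ∉ X := by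
  obtain ⟨l, d, k, m, n, rfl, rfl, rfl, -, hdt, hdh, -⟩ := h
  exact ⟨d, by simp, by simp, hdt, hdh⟩

lemma tail_mem_of_edge_mem_cut (h : IsSplice X p q r)
    (hx : x ∈ r) (hcut : x.edge ∈ H.cut X) : x.tail ∈ X := by
  obtain ⟨l, d, k, m, n, rfl, rfl, rfl, hl, hdt, -, hn⟩ := h
  rw [Dart.edge_mem_cut_iff] at hcut
  have hxl := hl x
  have hxn := hn x
  grind

lemma isWalk (h : IsSplice X p q r) {a b a' b' : V}
    (hp : IsWalk a p b) (hq : IsWalk a' q b') : IsWalk a r b' := by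
  obtain ⟨l, d, k, m, n, rfl, rfl, rfl, -⟩ := h
  exact isWalk_append_cons.2 ⟨(isWalk_append_cons.1 hp).1, (isWalk_append_cons.1 hq).2⟩

lemma nodup (h : IsSplice X p q r)
    (hp : (p.map Dart.edge).Nodup) (hq : (q.map Dart.edge).Nodup) : (r.map Dart.edge).Nodup := by
  obtain ⟨l, d, k, m, n, rfl, rfl, rfl, hl, -, hdh, hn⟩ := h
  rw [List.map_append] at hp hq ⊢
  refine List.nodup_append'.2 ⟨hp.of_append_left, hq.of_append_right, fun g hg hg' => ?_⟩
  obtain ⟨x, hx, rfl⟩ := List.mem_map.1 hg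
  obtain ⟨y, hy, hxy⟩ := List.mem_map.1 hg'
  refine Dart.edge_ne_of_ends_mem (hl x hx) ?_ hxy.symm
  rcases List.mem_cons.1 hy with rfl | hy
  · exact Or.inr hdh
  · exact Or.inl (hn y hy).1

end IsSplice

namespace IsLinkage

variable {X : Set V} {Q R : H.inci s → List H.Dart}

lemma index_eq_of_isSplice {dest' : H.inci s → V} (hF : IsLinkage dest F) (hQ : IsLinkage dest' Q)
    (hX : Saturates Q X) (hR : ∀ a, ∃ b, IsSplice X (F a) (Q b) (R a)) {a b : H.inci s}
    {x y : H.Dart} (hx : x ∈ R a) (hy : y ∈ R b) (h : x.edge = y.edge) : a = b := by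
  obtain ⟨a', ha⟩ := hR a
  obtain ⟨b', hb⟩ := hR b
  have hends : (x.tail ∈ X ∨ x.head ∈ X) ↔ (y.tail ∈ X ∨ y.head ∈ X) := by
    rcases Dart.eq_or_eq_symm_of_edge_eq h with rfl | rfl
    · rfl
    · exact or_comm
  by_cases hxX : x.tail ∈ X ∨ x.head ∈ X
  · exact hF.index_eq a b x (ha.mem_left hx hxX) y (hb.mem_left hy (hends.1 hxX)) h
  have hyX := hxX ∘ hends.2
  obtain ⟨d, hdF, hdQ, hdt, hdh⟩ := ha.exists_exit
  obtain ⟨d', hdF', hdQ', hdt', hdh'⟩ := hb.exists_exit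
  obtain rfl : a' = b' := hQ.index_eq a' b' x (ha.mem_right hx (.inl fun hm => hxX (.inl hm)))
    y (hb.mem_right hy (.inl fun hm => hyX (.inl hm))) h
  obtain rfl := hQ.eq_of_exit hX hdQ hdt hdh hdQ' hdt' hdh'
  exact hF.index_eq a b d hdF d hdF' rfl

lemma of_isSplice (hF : IsLinkage dest F) (hQ : IsLinkage (fun _ => t) Q) (hX : Saturates Q X)
    (hs : s ∈ X) (hst : t ≠ s) (hR : ∀ a, ∃ b, IsSplice X (F a) (Q b) (R a)) :
    IsLinkage (fun _ => t) R where
  isWalk a := by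
    obtain ⟨b, h⟩ := hR a
    exact h.isWalk (hF.isWalk a) (hQ.isWalk b)
  nodup a := by
    obtain ⟨b, h⟩ := hR a
    exact h.nodup (hF.nodup a) (hQ.nodup b)
  exists_edge_eq a := by
    obtain ⟨b, h⟩ := hR a
    obtain ⟨d, m, hd, hds⟩ := (h.isWalk (hF.isWalk a) (hQ.isWalk b)).exists_eq_cons hst
    have hdR : d ∈ R a := hd ▸ List.mem_cons_self
    obtain ⟨d', hd', hedge⟩ := hF.exists_edge_eq ⟨d.edge, Dart.edge_mem_inci_iff.2 (.inl hds.symm)⟩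
    have hdF : d ∈ F a := h.mem_left hdR (.inl (hds ▸ hs))
    exact ⟨d, hdR, congrArg Subtype.val (hF.index_eq _ a d' hd' d hdF hedge)⟩
  index_eq a b _ hx _ hy h := hF.index_eq_of_isSplice hQ hX hR hx hy h

lemma exists_splice (hF : IsLinkage dest F) (hdest : ∀ a, dest a ∉ X)
    (hQ : IsLinkage (fun _ => t) Q) (hX : Saturates Q X) (hs : s ∈ X) (hst : t ≠ s) :
    ∃ R, IsLinkage (fun _ => t) R ∧ ∀ a, ∃ b, IsSplice X (F a) (Q b) (R a) := by
  have hsplice : ∀ a, ∃ r, ∃ b, IsSplice X (F a) (Q b) r := by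
    intro a
    obtain ⟨l, d, k, hl, hin, hdt, hdh⟩ := (hF.isWalk a).exists_exit hs (hdest a)
    obtain ⟨b, hb⟩ := hX d hdt hdh
    obtain ⟨m, n, hm⟩ := List.append_of_mem hb
    exact ⟨l ++ d :: n, b, l, d, k, m, n, hl, hm, rfl, hin, hdt, hdh,
      hQ.outside_of_exit hX hm hdh⟩
  choose R hR using hsplice
  exact ⟨R, hF.of_isSplice hQ hX hs hst hR, hR⟩

lemma tail_mem_and_exists_mem_of_isSplice (hF : IsLinkage dest F)
    (hR : ∀ a, ∃ b, IsSplice X (F a) (Q b) (R a)) {f : E} (hf : f ∈ H.cut X)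
    (hfR : ∃ a, ∃ d ∈ R a, d.edge = f) {a₀ : H.inci s} {d₀ : H.Dart} (hd₀ : d₀ ∈ F a₀)
    (hdf : d₀.edge = f) : d₀.tail ∈ X ∧ ∃ a, d₀ ∈ R a := by
  obtain ⟨a, d, hd, rfl⟩ := hfR
  obtain ⟨b, hb⟩ := hR a
  have hdX := hb.tail_mem_of_edge_mem_cut hd hf
  obtain rfl := hF.dart_eq hd₀ (hb.mem_left hd (.inl hdX)) hdf
  exact ⟨hdX, a, hd⟩

end IsLinkage

/-! ### The residual graph of a linkage -/

lemma IsLinkage.forall_edge_ne_of_append (hF : IsLinkage dest F) {a : H.inci s}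
    {l m : List H.Dart} {d : H.Dart} {e : E} (ha : F a = l ++ d :: m) (hd : d.edge = e) :
    (∀ x ∈ l, x.edge ≠ e) ∧ ∀ x ∈ m, x.edge ≠ e := by
  have := hF.nodup a
  rw [ha, List.map_append, List.map_cons, hd] at this
  grind

section Residual

variable [DecidableEq E] {e : E} {X : Set V} {Q R : H.inci s → List H.Dart}

/-- The part of the trail `l` before it uses the edge `e`. -/
def stopAt (e : E) (l : List H.Dart) : List H.Dart := l.takeWhile (·.edge ≠ e)

lemma stopAt_eq_self {l : List H.Dart} (h : ∀ x ∈ l, x.edge ≠ e) : stopAt e l = l := by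
  simpa [stopAt] using h

lemma stopAt_append_cons {l m : List H.Dart} {d : H.Dart} (h : ∀ x ∈ l, x.edge ≠ e)
    (hd : d.edge = e) : stopAt e (l ++ d :: m) = l := by
  rw [stopAt, List.takeWhile_append_of_pos (by simpa using h)]
  simp [hd]

lemma mem_stopAt_append {l m : List H.Dart} {x : H.Dart} :
    x ∈ stopAt e (l ++ m) ↔ x ∈ stopAt e l ∨ (∀ z ∈ l, z.edge ≠ e) ∧ x ∈ stopAt e m := by
  induction l with
  | nil => simp [stopAt]
  | cons z l ih =>
    by_cases hz : z.edge = e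
    · simp [stopAt, hz]
    · have hcons : ∀ l', x ∈ stopAt e (z :: l') ↔ x = z ∨ x ∈ stopAt e l' := by simp [stopAt, hz]
      simp [hcons, ih, hz, or_assoc]

lemma mem_of_mem_stopAt {l : List H.Dart} {x : H.Dart} (hx : x ∈ stopAt e l) : x ∈ l :=
  (List.takeWhile_sublist _).subset hx

lemma edge_ne_of_mem_stopAt {l : List H.Dart} {x : H.Dart} (hx : x ∈ stopAt e l) : x.edge ≠ e := by
  simpa using List.mem_takeWhile_imp hx

lemma IsLinkage.stopAt (hF : IsLinkage dest F) {a : H.inci s} {d : H.Dart} (hd : d ∈ F a)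
    (hde : d.edge = e) (hds : d.tail ≠ s) :
    IsLinkage (Function.update dest a d.tail) fun b => stopAt e (F b) := by
  obtain ⟨l, m, hl⟩ := List.append_of_mem hd
  have hstopAt : (fun b => Multigraph.stopAt e (F b)) = Function.update F a l := by
    refine Function.eq_update_iff.2 ⟨?_, fun b hb => stopAt_eq_self fun x hx hxe => hb ?_⟩
    · rw [hl, stopAt_append_cons (hF.forall_edge_ne_of_append hl hde).1 hde]
    · exact hF.index_eq b a x hx d hd (hxe.trans hde.symm)
  rw [hstopAt]
  exact hF.update_of_eq_append hl (isWalk_append_cons.1 (hl ▸ hF.isWalk a)).1 hds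

/-- The dart `d` is an arc of the residual graph of the linkage `F` stopped at `e`, with `e` and
the arcs into `s` deleted: stopped trails may be traversed only against their direction. -/
structure IsFree (F : H.inci s → List H.Dart) (e : E) (d : H.Dart) : Prop where
  edge_ne : d.edge ≠ e
  head_ne : d.head ≠ s
  notMem : ∀ a, d ∉ stopAt e (F a)

/-- The vertices reachable in the residual graph of `F` stopped at `e` from the vertex where the
stopped trail ends. -/
def residualReach (F : H.inci s → List H.Dart) (e : E) : Set V :=
  {y | ∃ a, ∃ d ∈ F a, d.edge = e ∧ ∃ w, IsWalk d.tail w y ∧ ∀ x ∈ w, IsFree F e x}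

/-- The side containing `s` of the cut through `e` determined by the linkage `F`. -/
def sourceSide (F : H.inci s → List H.Dart) (e : E) : Set V := insert s (residualReach F e)

/-- Every linkage from `s` to `t` uses the edge `e`. -/
def IsUnavoidable (H : Multigraph V E) (s t : V) (e : E) : Prop :=
  ∀ F : H.inci s → List H.Dart, IsLinkage (fun _ => t) F → ∃ a, ∃ d ∈ F a, d.edge = e

lemma tail_mem_residualReach {a : H.inci s} {d : H.Dart} (hd : d ∈ F a) (hde : d.edge = e) :
    d.tail ∈ residualReach F e :=
  ⟨a, d, hd, hde, [], rfl, by simp⟩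

lemma head_mem_residualReach {d : H.Dart} (ht : d.tail ∈ residualReach F e) (hd : IsFree F e d) :
    d.head ∈ residualReach F e := by
  obtain ⟨a, d₀, hd₀, hde, w, hw, hfree⟩ := ht
  exact ⟨a, d₀, hd₀, hde, w ++ [d], hw.append_singleton,
    List.forall_mem_append.2 ⟨hfree, List.forall_mem_singleton.2 hd⟩⟩

namespace IsLinkage

lemma target_notMem_residualReach (hF : IsLinkage (fun _ => t) F) (hst : t ≠ s)
    (he : e ∉ H.inci s) (hu : IsUnavoidable H s t e) : t ∉ residualReach F e := by
  rintro ⟨a, d, hd, rfl, w, hw, hfree⟩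
  have hds : d.tail ≠ s := fun h => he (Dart.edge_mem_inci_iff.2 (.inl h.symm))
  obtain ⟨w', hnodup, hsub, hw'⟩ := hw.exists_nodup
  obtain ⟨b, F', hF', hF'sub⟩ := (hF.stopAt hd rfl hds).exists_augment hst hw' hnodup
    (fun x hx => (hfree x (hsub hx)).head_ne) (fun x hx => (hfree x (hsub hx)).notMem)
  obtain ⟨c, x, hx, hxe⟩ := hu F' (by simpa using hF')
  rcases hF'sub c x hx with hxw | ⟨c', hxc⟩
  · exact (hfree x (hsub hxw)).edge_ne hxe
  · exact edge_ne_of_mem_stopAt hxc hxe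

lemma target_notMem_sourceSide (hF : IsLinkage (fun _ => t) F) (hst : t ≠ s)
    (he : e ∉ H.inci s) (hu : IsUnavoidable H s t e) : t ∉ sourceSide F e :=
  not_or.2 ⟨hst, hF.target_notMem_residualReach hst he hu⟩

lemma saturates_sourceSide (hF : IsLinkage dest F) (hdest : ∀ a, dest a ≠ s) :
    Saturates F (sourceSide F e) := by
  rintro d ht hh
  obtain ⟨hds, hreach⟩ := not_or.1 hh
  rcases ht with hs | ht
  · obtain ⟨d', hd', hds', hedge⟩ := hF.exists_mem_tail_eq hdest
      ⟨d.edge, Dart.edge_mem_inci_iff.2 (.inl hs.symm)⟩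
    rcases Dart.eq_or_eq_symm_of_edge_eq hedge with rfl | rfl
    · exact ⟨_, hd'⟩
    · exact absurd hds' hds
  by_contra! hdF
  by_cases hde : d.edge = e
  · obtain ⟨a, d₀, hd₀, hd₀e, -⟩ := ht
    rcases Dart.eq_or_eq_symm_of_edge_eq (hd₀e.trans hde.symm) with rfl | rfl
    · exact hdF a hd₀
    · exact hreach (tail_mem_residualReach hd₀ hd₀e)
  · exact hreach (head_mem_residualReach ht ⟨hde, hds, fun a ha => hdF a (mem_of_mem_stopAt ha)⟩)

lemma isFree_of_append (hF : IsLinkage dest F) (hdest : ∀ a, dest a ≠ s) {a : H.inci s}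
    {l m : List H.Dart} {d : H.Dart} (ha : F a = l ++ d :: m) (hd : d.edge = e) :
    ∀ x ∈ m, IsFree F e x := by
  intro x hx
  have hxa : x ∈ F a := by simp [ha, hx]
  obtain ⟨hl, hm⟩ := hF.forall_edge_ne_of_append ha hd
  refine ⟨hm x hx, hF.head_ne hdest hxa, fun b hb => ?_⟩
  obtain rfl := hF.index_eq a b x hxa x (mem_of_mem_stopAt hb) rfl
  rw [ha, stopAt_append_cons hl hd] at hb
  have hnodup := (hF.nodup a).of_map
  rw [ha] at hnodup
  grind

lemma mem_cut_sourceSide (hF : IsLinkage (fun _ => t) F) (hst : t ≠ s)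
    (he : e ∉ H.inci s) (hu : IsUnavoidable H s t e) : e ∈ H.cut (sourceSide F e) := by
  obtain ⟨a, d, hd, rfl⟩ := hu F hF
  refine Dart.edge_mem_cut_iff.2 (.inl ⟨.inr (tail_mem_residualReach hd rfl), ?_⟩)
  rintro (hs | ⟨b, d', hd', hedge, w, hw, hfree⟩)
  · exact hF.head_ne (fun _ => hst) hd hs
  obtain ⟨l, m, ha⟩ := List.append_of_mem hd
  refine hF.target_notMem_residualReach hst he hu ⟨b, d', hd', hedge, w ++ m, ?_, ?_⟩
  · exact isWalk_append.2 ⟨_, hw, (isWalk_append_cons.1 (ha ▸ hF.isWalk a)).2⟩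
  · intro x hx
    exact (List.mem_append.1 hx).elim (hfree x) (hF.isFree_of_append (fun _ => hst) ha rfl x)

end IsLinkage

namespace IsSplice

variable {p q r : List H.Dart} {x : H.Dart}

lemma mem_stopAt (h : IsSplice X p q r) (hx : x ∈ stopAt e r) (hxX : x.tail ∈ X) :
    x ∈ stopAt e p := by
  obtain ⟨l, d, k, m, n, rfl, rfl, rfl, -, -, -, hn⟩ := h
  rw [List.append_cons, mem_stopAt_append] at hx ⊢
  exact .inl (hx.resolve_right fun hxn => (hn x (mem_of_mem_stopAt hxn.2)).1 hxX)

lemma exists_exit_mem_stopAt (h : IsSplice X p q r) (hx : x ∈ stopAt e r) (hxX : x.tail ∉ X) :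
    ∃ d ∈ stopAt e p, d ∈ q ∧ d.tail ∈ X ∧ d.head ∉ X := by
  obtain ⟨l, d, k, m, n, rfl, rfl, rfl, hl, hdt, hdh, -⟩ := h
  rw [List.append_cons, mem_stopAt_append] at hx
  have hxl : x ∉ l ++ [d] := by
    have := hl x
    grind
  have hne := (hx.resolve_left fun hx => hxl (mem_of_mem_stopAt hx)).1
  refine ⟨d, ?_, by simp, hdt, hdh⟩
  rw [List.append_cons, mem_stopAt_append, stopAt_eq_self hne]
  simp

end IsSplice

namespace IsLinkage

lemma isFree_splice_of_append {dest' : H.inci s → V} (hQ : IsLinkage dest' Q) (hX : Saturates Q X)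
    (hs : s ∈ X) (heX : e ∈ H.cut X) (hR : ∀ a, ∃ b, IsSplice X (F a) (Q b) (R a)) {c : H.inci s}
    {g : H.Dart} {m n : List H.Dart} (hc : Q c = m ++ g :: n) (hgt : g.tail ∈ X) (hgh : g.head ∉ X)
    (hg : IsFree F e g) : ∀ x ∈ n, IsFree R e x := by
  intro x hx
  obtain ⟨hxt, hxh⟩ := hQ.outside_of_exit hX hc hgh x hx
  refine ⟨?_, fun h => hxh (h ▸ hs), fun a ha => ?_⟩
  · rintro rfl
    exact (Dart.edge_mem_cut_iff.1 heX).elim (hxt ·.1) (hxh ·.1)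
  obtain ⟨b, hb⟩ := hR a
  obtain ⟨d, hdF, hdQ, hdt, hdh⟩ := hb.exists_exit_mem_stopAt ha hxt
  have hxb : x ∈ Q b := hb.mem_right (mem_of_mem_stopAt ha) (.inl hxt)
  obtain rfl := hQ.index_eq b c x hxb x (by simp [hc, hx]) rfl
  obtain rfl := hQ.eq_of_exit hX hdQ hdt hdh (by simp [hc]) hgt hgh
  exact hg.notMem a hdF

lemma residualReach_subset (hF : IsLinkage (fun _ => t) F) (hQ : IsLinkage (fun _ => t) Q)
    (hX : Saturates Q X) (hs : s ∈ X) (ht : t ∉ X) (heX : e ∈ H.cut X) (he : e ∉ H.inci s)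
    (hu : IsUnavoidable H s t e) : residualReach F e ⊆ X := by
  rintro y ⟨a₀, d₀, hd₀, hde, w, hw, hfree⟩
  by_contra hy
  have hst : t ≠ s := fun h => ht (h ▸ hs)
  obtain ⟨R, hRlink, hR⟩ := hF.exists_splice (fun _ => ht) hQ hX hs hst
  obtain ⟨hd₀X, a, hd₀R⟩ := hF.tail_mem_and_exists_mem_of_isSplice hR heX (hu R hRlink)
    hd₀ hde
  obtain ⟨w₁, g, w₂, rfl, hin, hgt, hgh⟩ := hw.exists_exit hd₀X hy
  obtain ⟨c, hg⟩ := hX g hgt hgh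
  obtain ⟨m, n, hc⟩ := List.append_of_mem hg
  have hnfree := hQ.isFree_splice_of_append hX hs heX hR hc hgt hgh (hfree g (by simp))
  have hsplice : ∀ x ∈ w₁ ++ g :: w₂, x.tail ∈ X → IsFree R e x := fun x hx hxX =>
    ⟨(hfree x hx).edge_ne, (hfree x hx).head_ne, fun b hb =>
      have ⟨_, hsb⟩ := hR b
      (hfree x hx).notMem b (hsb.mem_stopAt hb hxX)⟩
  refine hRlink.target_notMem_residualReach hst he hu ⟨a, d₀, hd₀R, hde, w₁ ++ g :: n, ?_, ?_⟩
  · exact isWalk_append_cons.2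
      ⟨(isWalk_append_cons.1 hw).1, (isWalk_append_cons.1 (hc ▸ hQ.isWalk c)).2⟩
  · intro x hx
    rcases List.mem_append.1 hx with hx | hx
    · exact hsplice x (List.mem_append_left _ hx) (hin x hx).1
    · rcases List.mem_cons.1 hx with rfl | hx
      · exact hsplice x (by simp) hgt
      · exact hnfree x hx

lemma sourceSide_eq (hF : IsLinkage (fun _ => t) F) (hQ : IsLinkage (fun _ => t) Q)
    (hst : t ≠ s) (he : e ∉ H.inci s) (hu : IsUnavoidable H s t e) :
    sourceSide F e = sourceSide Q e := by
  have hsub : ∀ {F Q : H.inci s → List H.Dart}, IsLinkage (fun _ => t) F →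
      IsLinkage (fun _ => t) Q → sourceSide F e ⊆ sourceSide Q e := fun hF hQ =>
    Set.insert_subset (Set.mem_insert s _) <|
      hF.residualReach_subset hQ (hQ.saturates_sourceSide fun _ => hst) (Set.mem_insert s _)
        (hQ.target_notMem_sourceSide hst he hu) (hQ.mem_cut_sourceSide hst he hu) he hu
  exact (hsub hF hQ).antisymm (hsub hQ hF)

end IsLinkage

end Residual

/-! ### Path systems as linkages -/

lemma Walk.darts_eq_cons {p : H.Walk s t} (hst : s ≠ t) (hp : p.support.Nodup) :
    ∃ d l, p.darts = d :: l ∧ d.edge ∈ H.inci s ∧ ∀ x ∈ l, x.edge ∉ H.inci s := by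
  cases p with
  | nil => exact absurd rfl hst
  | cons e he p =>
    have hs := (List.nodup_cons.1 hp).1
    refine ⟨_, _, rfl, Dart.edge_mem_inci_iff.2 (.inl rfl), fun x hx hxs => ?_⟩
    rcases Dart.edge_mem_inci_iff.1 hxs with rfl | rfl
    · exact hs (mem_support_of_mem_darts hx).1
    · exact hs (mem_support_of_mem_darts hx).2

lemma STPath.existsUnique_edge_mem_inci (p : H.STPath s t) (hst : s ≠ t) :
    ∃! f, f ∈ p.walk.edges ∧ f ∈ H.inci s := by
  obtain ⟨d, l, hl, hd, hl'⟩ := p.walk.darts_eq_cons hst p.support_nodup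
  refine ⟨d.edge, ⟨by simp [Walk.mem_edges_iff, hl], hd⟩, ?_⟩
  rintro f ⟨hf, hfs⟩
  obtain ⟨x, hx, rfl⟩ := Walk.mem_edges_iff.1 hf
  rw [hl] at hx
  rcases List.mem_cons.1 hx with rfl | hx
  · rfl
  · exact absurd hfs (hl' x hx)

lemma STPathDisjoint.exists_linkage {Q : Set (H.STPath s t)} (hQ : H.STPathDisjoint Q)
    (hcov : ∀ f ∈ H.inci s, ∃ q ∈ Q, f ∈ q.walk.edges) (hst : s ≠ t) :
    ∃ q : H.inci s → H.STPath s t, Set.range q = Q ∧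
      IsLinkage (fun _ => t) fun a => (q a).walk.darts := by
  choose q hqQ hq using fun a : H.inci s => hcov a a.2
  have heq : ∀ p ∈ Q, ∀ p' ∈ Q, ∀ f, f ∈ p.walk.edges → f ∈ p'.walk.edges → p = p' :=
    fun p hp p' hp' f hf hf' => by_contra fun hne => hQ p hp p' hp' hne f hf hf'
  refine ⟨q, Set.Subset.antisymm (Set.range_subset_iff.2 hqQ) fun p hp => ?_,
    fun a => (q a).walk.isWalk_darts, fun a => ?_, fun a => Walk.mem_edges_iff.1 (hq a), ?_⟩
  · obtain ⟨f, ⟨hfp, hfs⟩, -⟩ := p.existsUnique_edge_mem_inci hst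
    exact ⟨⟨f, hfs⟩, heq _ (hqQ _) p hp f (hq ⟨f, hfs⟩) hfp⟩
  · rw [Walk.map_edge_darts]
    exact Walk.edges_nodup_of_support_nodup (q a).support_nodup
  · intro a b d hd d' hd' h
    have hab : q a = q b := heq _ (hqQ a) _ (hqQ b) d.edge (Walk.mem_edges_iff.2 ⟨d, hd, rfl⟩)
      (Walk.mem_edges_iff.2 ⟨d', hd', h.symm⟩)
    exact Subtype.ext <| ((q b).existsUnique_edge_mem_inci hst).unique
      ⟨hab ▸ hq a, a.2⟩ ⟨hq b, b.2⟩

lemma IsLinkage.exists_stPathDisjoint (hF : IsLinkage (fun _ => t) F) (hst : t ≠ s) :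
    ∃ Q : Set (H.STPath s t), H.STPathDisjoint Q ∧
      (∀ f ∈ H.inci s, ∃ q ∈ Q, f ∈ q.walk.edges) ∧
      ∀ q ∈ Q, ∃ a, q.walk.darts ⊆ F a := by
  have hpath : ∀ a, ∃ q : H.STPath s t, q.walk.darts ⊆ F a := fun a =>
    have ⟨p, hp, hpF⟩ := (hF.isWalk a).exists_path
    ⟨⟨p, hp⟩, hpF⟩
  choose q hq using hpath
  refine ⟨Set.range q, ?_, fun f hf => ⟨q ⟨f, hf⟩, Set.mem_range_self _, ?_⟩, ?_⟩
  · rintro _ ⟨a, rfl⟩ _ ⟨b, rfl⟩ hab f hfa hfb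
    obtain ⟨x, hx, rfl⟩ := Walk.mem_edges_iff.1 hfa
    obtain ⟨y, hy, hxy⟩ := Walk.mem_edges_iff.1 hfb
    exact hab (congrArg q (hF.index_eq a b x (hq a hx) y (hq b hy) hxy.symm))
  · obtain ⟨d, m, hd, -, hdf⟩ := hF.exists_edge_eq_of_isWalk (a := ⟨f, hf⟩)
      (q ⟨f, hf⟩).walk.isWalk_darts hst fun x hx b y hy h =>
        (hF.index_eq _ b x (hq _ hx) y hy h).symm
    exact Walk.mem_edges_iff.2 ⟨d, by simp [hd], hdf⟩
  · rintro _ ⟨a, rfl⟩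
    exact ⟨a, hq a⟩

lemma isUnavoidable_of_forall_stPathDisjoint (hst : t ≠ s) {e : E}
    (huse : ∀ Q : Set (H.STPath s t), H.STPathDisjoint Q →
      (∀ f ∈ H.inci s, ∃ q ∈ Q, f ∈ q.walk.edges) → ∃ q ∈ Q, e ∈ q.walk.edges) :
    IsUnavoidable H s t e := by
  intro F hF
  obtain ⟨Q, hQ, hcov, hsub⟩ := hF.exists_stPathDisjoint hst
  obtain ⟨q, hq, he⟩ := huse Q hQ hcov
  obtain ⟨d, hd, hde⟩ := Walk.mem_edges_iff.1 he
  obtain ⟨a, ha⟩ := hsub q hq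
  exact ⟨a, d, ha hd, hde⟩

/-- The cut `C` consists of exactly one edge from each path of the system `Q`. -/
def IsOrthogonal (Q : Set (H.STPath s t)) (C : Set E) : Prop :=
  (∀ q ∈ Q, ∃! f, f ∈ C ∧ f ∈ q.walk.edges) ∧ ∀ f ∈ C, ∃ q ∈ Q, f ∈ q.walk.edges

lemma isOrthogonal_cut_of_saturates {X : Set V} {q : H.inci s → H.STPath s t}
    (hq : IsLinkage (fun _ => t) fun a => (q a).walk.darts)
    (hX : Saturates (fun a => (q a).walk.darts) X) (hs : s ∈ X) (ht : t ∉ X) :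
    IsOrthogonal (Set.range q) (H.cut X) := by
  simp only [IsOrthogonal, Set.forall_mem_range, Set.exists_range_iff, Walk.mem_edges_iff]
  exact ⟨fun _ => hq.existsUnique_edge_mem_cut hX hs ht, fun _ => hX.exists_edge_eq⟩

end Multigraph

/-- If some system of pairwise edge-disjoint `st`-paths covers `δ(s)` and the
edge `e ∉ δ(s)` is used by every such system, then there is an `s`-tight
Erdős–Menger `st`-cut `C` containing `e`: every system of pairwise
edge-disjoint `st`-paths covering `δ(s)` is orthogonal to `C`. -/
theorem tight_cut {V : Type u} {E : Type v} (H : Multigraph V E) (s t : V)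
    (hst : s ≠ t)
    (hP : ∃ P : Set (H.STPath s t), H.STPathDisjoint P ∧
      ∀ f ∈ H.inci s, ∃ p ∈ P, f ∈ p.walk.edges)
    (e : E) (he : e ∉ H.inci s)
    (huse : ∀ Q : Set (H.STPath s t), H.STPathDisjoint Q →
      (∀ f ∈ H.inci s, ∃ q ∈ Q, f ∈ q.walk.edges) →
      ∃ q ∈ Q, e ∈ q.walk.edges) :
    ∃ C : Set E, e ∈ C ∧ H.IsEMCut s t C ∧
      ∀ Q : Set (H.STPath s t), H.STPathDisjoint Q →
        (∀ f ∈ H.inci s, ∃ q ∈ Q, f ∈ q.walk.edges) →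
        (∀ q ∈ Q, ∃! f, f ∈ C ∧ f ∈ q.walk.edges) ∧
        (∀ f ∈ C, ∃ q ∈ Q, f ∈ q.walk.edges) := by
  classical
  have hu : Multigraph.IsUnavoidable H s t e :=
    Multigraph.isUnavoidable_of_forall_stPathDisjoint hst.symm huse
  obtain ⟨P, hP, hcov⟩ := hP
  obtain ⟨p, rfl, hp⟩ := hP.exists_linkage hcov hst
  set X := Multigraph.sourceSide (fun a => (p a).walk.darts) e with hX
  have hs : s ∈ X := Set.mem_insert s _
  have ht : t ∉ X := hp.target_notMem_sourceSide hst.symm he hu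
  have horth : ∀ Q : Set (H.STPath s t), H.STPathDisjoint Q →
      (∀ f ∈ H.inci s, ∃ q ∈ Q, f ∈ q.walk.edges) → Multigraph.IsOrthogonal Q (H.cut X) := by
    intro Q hQ hQcov
    obtain ⟨q, rfl, hq⟩ := hQ.exists_linkage hQcov hst
    refine Multigraph.isOrthogonal_cut_of_saturates hq ?_ hs ht
    rw [hX, hp.sourceSide_eq hq hst.symm he hu]
    exact hq.saturates_sourceSide fun _ => hst.symm
  exact ⟨H.cut X, hp.mem_cut_sourceSide hst.symm he hu,
    ⟨⟨X, hs, ht, rfl⟩, _, hP, horth _ hP hcov⟩, horth⟩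
end
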